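/- The set WO of reals coding well-orders is infinite time decidable. -/

import Mathlib

open scoped Classical

namespace ITTM

/-- A real is an element of Cantor space. -/
abbrev R := ℕ → Bool

/-- The constant-zero real. -/
def zeroR : R := fun _ => false

/-- The real ⟨1,0,0,...⟩ coding the answer "Yes". -/
def oneR : R := fun n => decide (n = 0)

/-- The real coding a natural number `p`: `p` ones followed by zeros. -/
def natR (p : ℕ) : R := fun n => decide (n < p)

/-- The real coding the pair of reals `(y, z)`. -/
def pairR (y z : R) : R := fun n => if n % 2 = 0 then y (n / 2) else z (n / 2)

/-- A snapshot of an infinite time Turing machine computation with state set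
`Fin (Q+1)`: the current state, the head position, and the contents of the
three tapes (tape 0 is the input tape, tape 1 the scratch tape, tape 2 the
output tape); cells hold values in `Bool` (`true` = 1, `false` = 0). -/
structure Snapshot (Q : ℕ) where
  state : Fin (Q + 1)
  head : ℕ
  tape : Fin 3 → ℕ → Bool

/-- An infinite time Turing machine program: a finite set of states
`Fin (Q+1)` with distinguished start, limit and halt states, and a finite
transition table which, given the current state and the three cell values
read by the head, specifies the next state, the three values to write, and
the direction to move (`true` = right, `false` = left). -/
structure Machine where
  Q : ℕ
  start : Fin (Q + 1)
  limit : Fin (Q + 1)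
  halt : Fin (Q + 1)
  trans : Fin (Q + 1) × (Fin 3 → Bool) → Fin (Q + 1) × (Fin 3 → Bool) × Bool

instance : Inhabited Machine := ⟨⟨0, 0, 0, 0, fun _ => (0, fun _ => false, true)⟩⟩

namespace Machine

/-- The initial snapshot on input `x`: head on cell 0 in the start state, `x`
on the input tape, the other tapes filled with zeros. -/
def init (M : Machine) (x : R) : Snapshot M.Q where
  state := M.start
  head := 0
  tape := fun i n => if i = 0 then x n else false

/-- One step of computation applied to a snapshot. -/
def stepSnap (M : Machine) (s : Snapshot M.Q) : Snapshot M.Q :=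
  let t := M.trans (s.state, fun i => s.tape i s.head)
  { state := t.1
    head := if t.2.2 then s.head + 1 else s.head - 1
    tape := fun i n => if n = s.head then t.2.1 i else s.tape i n }

/-- The snapshot of the computation of machine `M` on input `x` at ordinal
stage `α`, defined by transfinite recursion: at stage 0 the initial snapshot,
at successor stages the transition table is applied, and at limit stages the
head is on cell 0 in the limit state and each cell holds the `limsup` of its
earlier values (1 iff its value was 1 cofinally often below the limit). -/
noncomputable def snap (M : Machine) (x : R) : Ordinal.{0} → Snapshot M.Q :=
  WellFounded.fix Ordinal.lt_wf fun α ih =>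
    if _h0 : α = 0 then M.init x
    else if hs : ∃ β, β < α ∧ α = β + 1 then
      M.stepSnap (ih hs.choose hs.choose_spec.1)
    else
      { state := M.limit
        head := 0
        tape := fun i n =>
          decide (∀ β < α, ∃ γ, β ≤ γ ∧ ∃ hγ : γ < α, (ih γ hγ).tape i n = true) }

/-- The machine is in the halt state at stage `α`. -/
def haltedAt (M : Machine) (x : R) (α : Ordinal) : Prop :=
  (M.snap x α).state = M.halt

/-- The computation of `M` on input `x` halts exactly at stage `α`: stage `α`
is the first stage at which the machine is in the halt state. -/
def haltsAt (M : Machine) (x : R) (α : Ordinal) : Prop :=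
  M.haltedAt x α ∧ ∀ β < α, ¬ M.haltedAt x β

/-- The computation of `M` on input `x` halts. -/
def halts (M : Machine) (x : R) : Prop := ∃ α, M.haltedAt x α

/-- The computation of `M` on input `x` halts with output `y`: at the first
stage at which the machine is in the halt state, the output tape reads `y`. -/
def outputs (M : Machine) (x y : R) : Prop :=
  ∃ α, M.haltsAt x α ∧ (M.snap x α).tape 2 = y

end Machine

/-- Machines are coded by natural numbers. -/
noncomputable instance : Encodable Machine :=
  Encodable.ofEquiv
    (Σ Q : ℕ, (Fin (Q + 1) × Fin (Q + 1) × Fin (Q + 1)) ×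
      ((Fin (Q + 1) × (Fin 3 → Bool)) → Fin (Q + 1) × (Fin 3 → Bool) × Bool))
    { toFun := fun M => ⟨M.Q, (M.start, M.limit, M.halt), M.trans⟩
      invFun := fun s => ⟨s.1, s.2.1.1, s.2.1.2.1, s.2.1.2.2, s.2.2⟩
      left_inv := fun _ => rfl
      right_inv := fun _ => rfl }

/-- The machine coded by the natural number `p`; every natural number codes a
machine, and every machine is coded by some natural number. -/
noncomputable def prog (p : ℕ) : Machine :=
  ((Encodable.decode p : Option Machine)).getD default

/-- `φ_p(x)` halts with output `y`. -/
noncomputable def phiOutputs (p : ℕ) (x y : R) : Prop := (prog p).outputs x y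

/-- A set of reals is infinite time decidable when some machine, on any input
`x`, halts with output ⟨1,0,0,...⟩ if `x ∈ A` and output ⟨0,0,0,...⟩ if
`x ∉ A`. -/
def ITTMDecidable (A : Set R) : Prop :=
  ∃ M : Machine, ∀ x : R, (x ∈ A → M.outputs x oneR) ∧ (x ∉ A → M.outputs x zeroR)

/-- A set of reals is infinite time semi-decidable when it is the halting set
of some machine. -/
def ITTMSemiDecidable (A : Set R) : Prop :=
  ∃ M : Machine, A = {x : R | M.halts x}

/-- The binary relation on ℕ coded by the real `x`:
`n ◁ k ⟺ x(⟨n,k⟩) = 1` where `⟨·,·⟩` is the pairing function. -/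
def rel (x : R) (n k : ℕ) : Prop := x (Nat.pair n k) = true

/-- The field of the relation coded by `x`. -/
def field (x : R) : Set ℕ := {n | ∃ k, rel x n k ∨ rel x k n}

/-- The relation coded by `x`, restricted to its field. -/
def relOn (x : R) : field x → field x → Prop := fun a b => rel x a.1 b.1

/-- The real `x` codes a well-order of (a subset of) ℕ, namely its field. -/
def codesWellOrder (x : R) : Prop := IsWellOrder (field x) (relOn x)

/-- The set of reals coding well-orders. -/
def WO : Set R := {x | codesWellOrder x}

/-- The real `x` codes a well-order of order type `α`. -/
def codesOrdinal (x : R) (α : Ordinal) : Prop :=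
  ∃ h : codesWellOrder x, @Ordinal.type _ (relOn x) h = α

/-- An ordinal is clockable when some machine on input 0 halts exactly at
stage `α`. -/
def Clockable (α : Ordinal) : Prop := ∃ M : Machine, M.haltsAt zeroR α

/-- A real is writable when it is the output of some machine on input 0. -/
def WritableReal (x : R) : Prop := ∃ M : Machine, M.outputs zeroR x

/-- An ordinal is writable when some writable real codes a well-order of that
order type. -/
def WritableOrdinal (α : Ordinal) : Prop :=
  ∃ x : R, WritableReal x ∧ codesOrdinal x α

/-- A real is eventually writable when some machine on input 0 never halts,
but from some stage onward the content of its output tape is exactly `x`. -/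
def EventuallyWritableReal (x : R) : Prop :=
  ∃ M : Machine, ¬ M.halts zeroR ∧ ∃ α : Ordinal, ∀ β ≥ α, (M.snap zeroR β).tape 2 = x

/-- An ordinal is eventually writable when some eventually writable real codes
a well-order of that order type. -/
def EventuallyWritableOrdinal (α : Ordinal) : Prop :=
  ∃ x : R, EventuallyWritableReal x ∧ codesOrdinal x α

end ITTM

namespace ITTM

open Ordinal

namespace CountThrough

/-- Control states of the machine deciding `WO`; boolean arguments are bits carried along. -/
inductive Ctl
  | halt | lim | lim1 (d w : Bool) | fin (n : Bool) | clean
  | i0 (w : Bool) | i1 | j0 | j1 | i2 | i3 | i4 | i5 | i6 | i7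
  | touchL | touchG (l : Bool) | wrL (new rem : Bool)
  | toZ (new rem : Bool) | hdr (rem : Bool) | hdr1 | setA0
  | toM2 (cm : Bool) | toP | pb (i : Fin 5) | pf (y : Bool) (i : Fin 5) | pset (y : Bool)
  | toM (y : Bool) | atL (y : Bool) | toA (y lm : Bool) | atGa (ca cm : Bool)
  | setA (cm : Bool) | chk (cm : Bool) | clrA | diag (cd : Bool)
deriving Fintype

/-- States: a control state, whether the machine is in its first pass, and whether it is reading
the row part `(m, a)`, `a ≤ m`, or the column part `(a, m)`, `a < m`, of the current shell. -/
structure St where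
  ctl : Ctl
  first : Bool
  row : Bool
deriving Fintype

/-- Whether entry `y`, at the position of the pair formed by `a` and `m`, makes `a` bad. -/
def condA (first row y lm : Bool) : Bool := if first then y else (y == row) && lm

/-- Whether entry `y`, at the position of the pair formed by `a` and `m`, makes `m` bad. -/
def condM (first row y la : Bool) : Bool := if first then y else (y != row) && la

/-- Transition function: from the state and the bits read on the three tapes, the next state, the
bits to write on the scratch and output tapes, and the direction. -/
def δ (s : St) (y u v : Bool) : St × Bool × Bool × Bool :=
  match s with
  | ⟨c, f, r⟩ =>
    match c with
    | .halt => (⟨.halt, f, r⟩, u, v, true)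
    | .lim => (⟨.lim1 u v, f, r⟩, u, v, true)
    | .lim1 d w =>
      match v, d with
      | false, _ => (⟨.fin u, f, r⟩, u, false, false)
      | true, false => (⟨.clean, f, r⟩, u, false, false)
      | true, true => (⟨.i0 w, f, r⟩, false, true, false)
    | .fin n => (⟨.halt, f, r⟩, u, !n, true)
    | .clean => (⟨.clean, f, r⟩, u, false, true)
    | .i0 w => (⟨.i1, f, r⟩, w, true, true)
    | .i1 => (⟨.j0, f, r⟩, u, true, false)
    | .j0 => (⟨.j1, f, r⟩, u, f, true)
    | .j1 => (⟨.i2, f, r⟩, u, v, true)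
    | .i2 => (⟨.i3, f, r⟩, u, false, true)
    | .i3 => (⟨.i4, f, r⟩, u, false, true)
    | .i4 => (⟨.i5, f, r⟩, u, false, true)
    | .i5 => (⟨.i6, f, r⟩, u, true, false)
    | .i6 => (⟨.i7, f, r⟩, u, v, false)
    | .i7 => (⟨.touchL, f, r⟩, u, v, false)
    | .touchL => (⟨.touchG u, f, r⟩, u, v, true)
    | .touchG l => (⟨.wrL (f || (l && u)) (l && !u), f, r⟩, false, true, false)
    | .wrL new rem => (⟨.toZ new rem, f, r⟩, new, v, false)
    | .toZ new rem =>
      match v with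
      | true => (⟨.hdr rem, f, r⟩, u || new, true, false)
      | false => (⟨.toZ new rem, f, r⟩, u, false, false)
    | .hdr rem => (⟨.hdr1, f, r⟩, u || rem, v, true)
    | .hdr1 => (⟨.setA0, f, r⟩, u, v, true)
    | .setA0 => (⟨.toM2 false, f, r⟩, u, true, true)
    | .toM2 cm =>
      match v with
      | true => (⟨.toP, f, r⟩, u || cm, true, true)
      | false => (⟨.toM2 cm, f, r⟩, u, false, true)
    | .toP =>
      match v with
      | true => (⟨.pb 4, f, r⟩, u, true, false)
      | false => (⟨.toP, f, r⟩, u, false, true)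
    | .pb 0 => (⟨.pf y 4, f, r⟩, u, v, true)
    | .pb 1 => (⟨.pb 0, f, r⟩, u, v, false)
    | .pb 2 => (⟨.pb 1, f, r⟩, u, v, false)
    | .pb 3 => (⟨.pb 2, f, r⟩, u, v, false)
    | .pb 4 => (⟨.pb 3, f, r⟩, u, v, false)
    | .pf z 0 => (⟨.pset z, f, r⟩, u, false, true)
    | .pf z 1 => (⟨.pf z 0, f, r⟩, u, v, true)
    | .pf z 2 => (⟨.pf z 1, f, r⟩, u, v, true)
    | .pf z 3 => (⟨.pf z 2, f, r⟩, u, v, true)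
    | .pf z 4 => (⟨.pf z 3, f, r⟩, u, v, true)
    | .pset z => (⟨.toM z, f, r⟩, u, true, false)
    | .toM z =>
      match v with
      | true => (⟨.atL z, f, r⟩, u, true, false)
      | false => (⟨.toM z, f, r⟩, u, false, false)
    | .atL z =>
      match v with
      | true => (⟨.diag (z && (f || u)), f, r⟩, u, false, true)
      | false => (⟨.toA z u, f, r⟩, u, false, false)
    | .toA z lm =>
      match v with
      | true => (⟨.atGa (condA f r z lm) (condM f r z u), f, r⟩, u, false, true)
      | false => (⟨.toA z lm, f, r⟩, u, false, false)
    | .atGa ca cm => (⟨.setA cm, f, r⟩, u || ca, v, true)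
    | .setA cm => (⟨.chk cm, f, r⟩, u, true, true)
    | .chk cm =>
      match v, r with
      | true, true => (⟨.toP, f, true⟩, u || cm, true, true)
      | true, false => (⟨.clrA, f, false⟩, u || cm, true, false)
      | false, r => (⟨.toM2 cm, f, r⟩, u, false, true)
    | .clrA => (⟨.toZ false false, f, true⟩, u, false, false)
    | .diag cd => (⟨.touchL, f, false⟩, u || cd, false, true)

/-- A configuration, with the (never modified) input tape left out. -/
structure Cfg where
  st : St
  hd : ℕ
  u : ℕ → Bool
  v : ℕ → Bool

/-- One computation step on input `x`. -/
def cstep (x : R) (c : Cfg) : Cfg :=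
  let o := δ c.st (x c.hd) (c.u c.hd) (c.v c.hd)
  ⟨o.1, if o.2.2.2 then c.hd + 1 else c.hd - 1,
    Function.update c.u c.hd o.2.1, Function.update c.v c.hd o.2.2.1⟩

instance : Nonempty St := ⟨⟨.halt, false, true⟩⟩

/-- Numbering of the states. -/
noncomputable def enc (s : St) : Fin (Nat.card St + 1) := (Finite.equivFin St s).castSucc

/-- The left inverse of `enc`. -/
noncomputable def dec : Fin (Nat.card St + 1) → St := Function.invFun enc

theorem enc_injective : Function.Injective enc :=
  (Fin.castSucc_injective _).comp (Finite.equivFin St).injective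

theorem dec_enc (s : St) : dec (enc s) = s := Function.leftInverse_invFun enc_injective s

/-- The machine deciding `WO`. -/
noncomputable def mach : Machine where
  Q := Nat.card St
  start := enc ⟨.i0 true, true, true⟩
  limit := enc ⟨.lim, false, true⟩
  halt := enc ⟨.halt, false, true⟩
  trans := fun qr =>
    let o := δ (dec qr.1) (qr.2 0) (qr.2 1) (qr.2 2)
    (enc o.1, ![qr.2 0, o.2.1, o.2.2.1], o.2.2.2)

end CountThrough

namespace Machine

variable (M : Machine) (x : R)

theorem snap_zero : M.snap x 0 = M.init x := by
  rw [snap, WellFounded.fix_eq]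
  simp

theorem snap_add_one (α : Ordinal.{0}) : M.snap x (α + 1) = M.stepSnap (M.snap x α) := by
  conv_lhs => rw [snap, WellFounded.fix_eq]
  have hs : ∃ β, β < α + 1 ∧ α + 1 = β + 1 := ⟨α, lt_add_one α, rfl⟩
  have h0 : α + 1 ≠ 0 := by simp
  rw [dif_neg h0, dif_pos hs]
  have : hs.choose = α := (Order.succ_injective (by simpa using hs.choose_spec.2)).symm
  exact congrArg (fun β => M.stepSnap (M.snap x β)) this

theorem snap_limit {α : Ordinal.{0}} (h : Order.IsSuccLimit α) :
    M.snap x α =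
      { state := M.limit
        head := 0
        tape := fun i n =>
          decide (∀ β < α, ∃ γ, β ≤ γ ∧ γ < α ∧ (M.snap x γ).tape i n = true) } := by
  conv_lhs => rw [snap, WellFounded.fix_eq]
  have hs : ¬ ∃ β, β < α ∧ α = β + 1 := by
    rintro ⟨β, hβ, rfl⟩
    exact h.isSuccPrelimit β (Order.covBy_add_one β)
  have h0 : α ≠ 0 := h.ne_bot
  rw [dif_neg h0, dif_neg hs]
  simp only [snap, exists_prop]
  congr!

end Machine

namespace CountThrough

variable (x : R)

theorem snap_coherent (α : Ordinal.{0}) :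
    (mach.snap x α).tape 0 = x ∧ enc (dec (mach.snap x α).state) = (mach.snap x α).state := by
  induction α using Ordinal.limitRecOn with
  | zero =>
    rw [Machine.snap_zero]
    exact ⟨by simp [Machine.init], congrArg enc (dec_enc _)⟩
  | add_one α ih =>
    rw [Machine.snap_add_one]
    refine ⟨funext fun n => ?_, congrArg enc (dec_enc _)⟩
    by_cases hn : n = (mach.snap x α).head
    · subst hn
      simp only [Machine.stepSnap, if_true]
      exact congrFun ih.1 _
    · simp [Machine.stepSnap, hn, ih.1]
  | limit α h ih =>
    rw [Machine.snap_limit _ _ h]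
    refine ⟨funext fun n => ?_, congrArg enc (dec_enc _)⟩
    rw [Bool.eq_iff_iff, decide_eq_true_iff]
    constructor
    · intro H
      obtain ⟨γ, -, hγ, e⟩ := H 0 h.bot_lt
      rwa [(ih γ hγ).1] at e
    · intro e β hβ
      exact ⟨β, le_rfl, hβ, by rwa [(ih β hβ).1]⟩

/-- The configuration at stage `α` on input `x`. -/
noncomputable def conf (α : Ordinal.{0}) : Cfg :=
  ⟨dec (mach.snap x α).state, (mach.snap x α).head, (mach.snap x α).tape 1,
    (mach.snap x α).tape 2⟩

theorem conf_zero : conf x 0 = ⟨⟨.i0 true, true, true⟩, 0, zeroR, zeroR⟩ := by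
  rw [conf, Machine.snap_zero]
  exact congrArg (fun s => Cfg.mk s 0 zeroR zeroR) (dec_enc _)

theorem conf_add_one (α : Ordinal.{0}) : conf x (α + 1) = cstep x (conf x α) := by
  have hx : (mach.snap x α).tape 0 (mach.snap x α).head = x (mach.snap x α).head :=
    congrFun (snap_coherent x α).1 _
  let o (b : Bool) := δ (conf x α).st b ((conf x α).u (conf x α).hd) ((conf x α).v (conf x α).hd)
  let C (b : Bool) : Cfg := ⟨(o b).1, if (o b).2.2.2 then (conf x α).hd + 1 else (conf x α).hd - 1,
    fun n => if n = (conf x α).hd then (o b).2.1 else (conf x α).u n,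
    fun n => if n = (conf x α).hd then (o b).2.2.1 else (conf x α).v n⟩
  have h1 : conf x (α + 1) = C ((mach.snap x α).tape 0 (mach.snap x α).head) := by
    rw [conf, Machine.snap_add_one]
    exact congrArg (fun s => Cfg.mk s _ _ _) (dec_enc _)
  have h2 : cstep x (conf x α) = C (x (mach.snap x α).head) := by
    simp only [cstep, C, Cfg.mk.injEq]
    exact ⟨rfl, rfl, funext fun n => Function.update_apply ..,
      funext fun n => Function.update_apply ..⟩
  rw [h1, h2, hx]

theorem conf_limit {α : Ordinal.{0}} (h : Order.IsSuccLimit α) :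
    conf x α = ⟨⟨.lim, false, true⟩, 0,
      fun n => decide (∀ β < α, ∃ γ, β ≤ γ ∧ γ < α ∧ (conf x γ).u n = true),
      fun n => decide (∀ β < α, ∃ γ, β ≤ γ ∧ γ < α ∧ (conf x γ).v n = true)⟩ := by
  rw [conf, Machine.snap_limit _ _ h]
  exact congrArg (fun s => Cfg.mk s _ _ _) (dec_enc _)

theorem outputs_of_conf {y : R} {α : Ordinal.{0}} (h : (conf x α).st = ⟨.halt, false, true⟩)
    (h' : ∀ β < α, (conf x β).st.ctl ≠ .halt) (hv : (conf x α).v = y) : mach.outputs x y := by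
  refine ⟨α, ⟨?_, fun β hβ hb => h' β hβ ?_⟩, hv⟩
  · rw [Machine.haltedAt, ← (snap_coherent x α).2]
    exact congrArg enc h
  · have := congrArg dec hb
    rw [show mach.halt = enc ⟨.halt, false, true⟩ from rfl, dec_enc] at this
    exact congrArg St.ctl this

theorem conf_add_nat (α : Ordinal.{0}) (i : ℕ) : conf x (α + i) = (cstep x)^[i] (conf x α) := by
  induction i with
  | zero => simp
  | succ i ih => rw [Nat.cast_succ, ← add_assoc, conf_add_one, ih, Function.iterate_succ_apply']

theorem isSuccLimit_add_omega0 (α : Ordinal.{0}) : Order.IsSuccLimit (α + ω) :=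
  isSuccLimit_add α isSuccLimit_omega0

/-- A bit of the configuration that is eventually constant over `ω` steps has that value in the
limit. -/
theorem limsup_eq_of_eventually {α : Ordinal.{0}} {f : Cfg → Bool} {b : Bool} {j : ℕ}
    (h : ∀ i ≥ j, f ((cstep x)^[i] (conf x α)) = b) :
    decide (∀ β < α + ω, ∃ γ, β ≤ γ ∧ γ < α + ω ∧ f (conf x γ) = true) = b := by
  have key : ∀ γ, α + j ≤ γ → γ < α + ω → f (conf x γ) = b := by
    intro γ h1 h2
    have hα : α ≤ γ := le_self_add.trans h1
    obtain ⟨k, hk⟩ := lt_omega0.1 (show γ - α < ω from sub_lt_of_lt_add h2 omega0_pos)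
    have e : γ = α + k := by rw [← hk, Ordinal.add_sub_cancel_of_le hα]
    subst e
    have hjk : j ≤ k := by simpa using h1
    rw [conf_add_nat]
    exact h k hjk
  have hj : α + j < α + ω := by simp
  cases b with
  | false =>
    rw [decide_eq_false_iff_not]
    intro H
    obtain ⟨γ, h1, h2, h3⟩ := H _ hj
    rw [key γ h1 h2] at h3
    exact absurd h3 (by simp)
  | true =>
    rw [decide_eq_true_iff]
    intro β hβ
    exact ⟨max β (α + j), le_max_left _ _, max_lt hβ hj, key _ (le_max_right _ _) (max_lt hβ hj)⟩

theorem conf_add_omega0_u {α : Ordinal.{0}} {n : ℕ} {b : Bool} {j : ℕ}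
    (h : ∀ i ≥ j, ((cstep x)^[i] (conf x α)).u n = b) : (conf x (α + ω)).u n = b := by
  rw [conf_limit x (isSuccLimit_add_omega0 α)]
  exact limsup_eq_of_eventually x (f := fun c => c.u n) h

theorem conf_add_omega0_v {α : Ordinal.{0}} {n : ℕ} {b : Bool} {j : ℕ}
    (h : ∀ i ≥ j, ((cstep x)^[i] (conf x α)).v n = b) : (conf x (α + ω)).v n = b := by
  rw [conf_limit x (isSuccLimit_add_omega0 α)]
  exact limsup_eq_of_eventually x (f := fun c => c.v n) h

end CountThrough

end ITTM

namespace ITTM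

namespace CountThrough

open Function (update)

/-- `u` agrees at each cell with one of the tapes `F` and `F'`. -/
def Mixed (F F' u : ℕ → Bool) : Prop := ∀ n, u n = F n ∨ u n = F' n

theorem Mixed.left (F F' : ℕ → Bool) : Mixed F F' F := fun _ => .inl rfl

theorem Mixed.update {F F' u : ℕ → Bool} (hu : Mixed F F' u) {c : ℕ} {b : Bool} (hb : F' c = b) :
    Mixed F F' (update u c b) := by
  intro n
  by_cases h : n = c
  · subst h
    exact .inr (by simp [hb])
  · simpa [h] using hu n

/-- The requirement on the intermediate configurations of a stretch of the computation that turns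
the scratch tape from `F` into `F'`. -/
def Good (F F' : ℕ → Bool) (μ : Bool) (c : Cfg) : Prop :=
  c.st.ctl ≠ .halt ∧ Mixed F F' c.u ∧ c.v 0 = μ ∧ c.v 1 = true

/-- From `c`, passing through good configurations only, one reaches a configuration in `E`. -/
def Run (x : R) (F F' : ℕ → Bool) (μ : Bool) (E : Cfg → Prop) (c : Cfg) : Prop :=
  ∃ k, E ((cstep x)^[k] c) ∧ ∀ i < k, Good F F' μ ((cstep x)^[i] c)

section Run

variable {x : R} {F F' : ℕ → Bool} {μ : Bool} {E : Cfg → Prop}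

theorem Run.done {c : Cfg} (h : E c) : Run x F F' μ E c := ⟨0, h, by simp⟩

theorem Run.head {c : Cfg} (hc : Good F F' μ c) (h : Run x F F' μ E (cstep x c)) :
    Run x F F' μ E c := by
  obtain ⟨k, hk, hi⟩ := h
  refine ⟨k + 1, hk, fun i hik => ?_⟩
  cases i with
  | zero => exact hc
  | succ i => exact hi i (by omega)

/-- The shape of the output tape: a mark at `P`, the flag `μ` in cell `0`, a mark in cell `1`, and
between these the marks given by `S`. -/
structure Marks (v : ℕ → Bool) (μ : Bool) (P : ℕ) (S : ℕ → Prop) : Prop where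
  at_P : v P = true
  at_zero : v 0 = μ
  at_one : v 1 = true
  below : ∀ c, 2 ≤ c → c < P → (v c = true ↔ S c)

variable {s s' : St} {h : ℕ} {u v : ℕ → Bool} {b b' : Bool} {P : ℕ} {S S' : ℕ → Prop}

theorem Marks.update (hv : Marks v μ P S) {c₀ : ℕ} (b : Bool) (h2 : 2 ≤ c₀) (hP : c₀ < P)
    (hS : ∀ c, 2 ≤ c → c < P → (S' c ↔ if c = c₀ then b = true else S c)) :
    Marks (update v c₀ b) μ P S' := by
  obtain ⟨h₁, h₂, h₃, h₄⟩ := hv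
  refine ⟨?_, ?_, ?_, fun c hc hcP => ?_⟩
  · rwa [Function.update_of_ne (by omega)]
  · rwa [Function.update_of_ne (by omega)]
  · rwa [Function.update_of_ne (by omega)]
  · rw [hS c hc hcP, Function.update_apply]
    split_ifs
    · rfl
    · exact h₄ c hc hcP

theorem Marks.eq_true (hv : Marks v μ P S) {c : ℕ} (h2 : 2 ≤ c) (hP : c < P) (hS : S c) :
    v c = true := (hv.below c h2 hP).2 hS

theorem Marks.eq_false (hv : Marks v μ P S) {c : ℕ} (h2 : 2 ≤ c) (hP : c < P) (hS : ¬ S c) :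
    v c = false := by
  rw [← Bool.not_eq_true, hv.below c h2 hP]
  exact hS

theorem Run.stepRight (e : δ s (x h) (u h) (v h) = (s', b, b', true)) (hs : s.ctl ≠ .halt)
    (hu : Mixed F F' u) (h0 : v 0 = μ) (h1 : v 1 = true)
    (H : Run x F F' μ E ⟨s', h + 1, update u h b, update v h b'⟩) :
    Run x F F' μ E ⟨s, h, u, v⟩ := by
  refine .head ⟨hs, hu, h0, h1⟩ ?_
  simpa [cstep, e] using H

theorem Run.stepLeft (e : δ s (x (h + 1)) (u (h + 1)) (v (h + 1)) = (s', b, b', false))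
    (hs : s.ctl ≠ .halt) (hu : Mixed F F' u) (h0 : v 0 = μ) (h1 : v 1 = true)
    (H : Run x F F' μ E ⟨s', h, update u (h + 1) b, update v (h + 1) b'⟩) :
    Run x F F' μ E ⟨s, h + 1, u, v⟩ := by
  refine .head ⟨hs, hu, h0, h1⟩ ?_
  simpa [cstep, e] using H

/-- A step to the right that changes neither tape. -/
theorem Run.right (e : δ s (x h) (u h) (v h) = (s', u h, v h, true)) (hs : s.ctl ≠ .halt)
    (hu : Mixed F F' u) (h0 : v 0 = μ) (h1 : v 1 = true)
    (H : Run x F F' μ E ⟨s', h + 1, u, v⟩) : Run x F F' μ E ⟨s, h, u, v⟩ :=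
  .stepRight e hs hu h0 h1 (by simpa using H)

/-- A step to the left that changes neither tape. -/
theorem Run.left (e : δ s (x (h + 1)) (u (h + 1)) (v (h + 1)) = (s', u (h + 1), v (h + 1), false))
    (hs : s.ctl ≠ .halt) (hu : Mixed F F' u) (h0 : v 0 = μ) (h1 : v 1 = true)
    (H : Run x F F' μ E ⟨s', h, u, v⟩) : Run x F F' μ E ⟨s, h + 1, u, v⟩ :=
  .stepLeft e hs hu h0 h1 (by simpa using H)

/-- Searching to the right for the next mark on the output tape. -/
theorem Run.scanRight (e : ∀ y w, δ s y w false = (s, w, false, true)) (hs : s.ctl ≠ .halt)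
    (hu : Mixed F F' u) (h0 : v 0 = μ) (h1 : v 1 = true) (h' : ℕ) (hh : h ≤ h')
    (hv : ∀ c, h ≤ c → c < h' → v c = false)
    (H : Run x F F' μ E ⟨s, h', u, v⟩) : Run x F F' μ E ⟨s, h, u, v⟩ := by
  induction hk : h' - h generalizing h with
  | zero => rwa [show h = h' by omega]
  | succ k ih =>
    have hvh := hv h le_rfl (by omega)
    refine .right (s' := s) (by rw [hvh, e]) hs hu h0 h1 ?_
    exact ih (by omega) (fun c hc => hv c (by omega)) (by omega)

/-- Searching to the left for the next mark on the output tape. -/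
theorem Run.scanLeft (e : ∀ y w, δ s y w false = (s, w, false, false)) (hs : s.ctl ≠ .halt)
    (hu : Mixed F F' u) (h0 : v 0 = μ) (h1 : v 1 = true) (h' : ℕ) (hh : h' ≤ h)
    (hv : ∀ c, h' < c → c ≤ h → v c = false)
    (H : Run x F F' μ E ⟨s, h', u, v⟩) : Run x F F' μ E ⟨s, h, u, v⟩ := by
  induction h with
  | zero => rwa [show 0 = h' by omega]
  | succ h ih =>
    by_cases hh' : h' = h + 1
    · rwa [← hh']
    · have hvh := hv (h + 1) (by omega) le_rfl
      refine .left (s' := s) (by rw [hvh, e]) hs hu h0 h1 ?_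
      exact ih (by omega) (fun c h₁ h₂ => hv c h₁ (by omega))

variable {r : Bool} {m a p : ℕ}

/-- Moving right to the mark at `P`. -/
theorem Run.toP (hu : Mixed F F' u) (hv : Marks v μ P S) (h2 : 2 ≤ h) (hP : h ≤ P)
    (hS : ∀ c, h ≤ c → ¬ S c) (H : Run x F F' μ E ⟨⟨.toP, μ, r⟩, P, u, v⟩) :
    Run x F F' μ E ⟨⟨.toP, μ, r⟩, h, u, v⟩ :=
  .scanRight (fun _ _ => rfl) (by simp) hu hv.at_zero hv.at_one P hP
    (fun c h₁ h₂ => hv.eq_false (by omega) h₂ (hS c h₁)) H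

/-- Moving right to the mark for `m`, updating the bit for the badness of `m`, and going on to the
mark at `P`. -/
theorem Run.toM2 {cm : Bool} (hu : Mixed F F' u) (hv : Marks v μ P S) (h2 : 2 ≤ h)
    (hm : h ≤ 2 * m + 3) (hP : 2 * m + 3 < P) (hS : ∀ c, h ≤ c → (S c ↔ c = 2 * m + 3))
    (hF : F' (2 * m + 3) = (u (2 * m + 3) || cm))
    (H : Run x F F' μ E
      ⟨⟨.toP, μ, r⟩, P, update u (2 * m + 3) (u (2 * m + 3) || cm), v⟩) :
    Run x F F' μ E ⟨⟨.toM2 cm, μ, r⟩, h, u, v⟩ := by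
  refine .scanRight (fun _ _ => rfl) (by simp) hu hv.at_zero hv.at_one (2 * m + 3) hm
    (fun c h₁ h₂ => hv.eq_false (by omega) (by omega) (by rw [hS c h₁]; omega)) ?_
  have hvm : v (2 * m + 3) = true := hv.eq_true (by omega) hP ((hS _ hm).2 rfl)
  refine .stepRight (by rw [hvm]; rfl) (by simp) hu hv.at_zero hv.at_one ?_
  rw [← hvm, Function.update_eq_self]
  refine .toP (hu.update hF) hv (by omega) (by omega) (fun c hc => ?_) H
  rw [hS c (by omega)]
  omega

/-- Moving left to the header, updating it, then going to the mark at `P` after setting the mark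
for `a = 0`. -/
theorem Run.toZ {new rem : Bool} (hu : Mixed F F' u) (hv : Marks v μ P S) (h1 : 1 ≤ h)
    (hm : h < 2 * m + 3) (hP : 2 * m + 3 < P) (hS : ∀ c, 2 ≤ c → (S c ↔ c = 2 * m + 3))
    (hF1 : F' 1 = (u 1 || new)) (hF0 : F' 0 = (u 0 || rem))
    (hFm : F' (2 * m + 3) = u (2 * m + 3))
    (H : ∀ v', Marks v' μ P (fun c => c = 2 ∨ c = 2 * m + 3) → Run x F F' μ E
      ⟨⟨.toP, μ, r⟩, P, update (update u 1 (u 1 || new)) 0 (u 0 || rem), v'⟩) :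
    Run x F F' μ E ⟨⟨.toZ new rem, μ, r⟩, h, u, v⟩ := by
  refine .scanLeft (fun _ _ => rfl) (by simp) hu hv.at_zero hv.at_one 1 h1
    (fun c h₁ h₂ => hv.eq_false (by omega) (by omega) (by rw [hS c (by omega)]; omega)) ?_
  refine .stepLeft (h := 0) (by rw [zero_add, hv.at_one]; rfl) (by simp) hu hv.at_zero hv.at_one ?_
  rw [zero_add, ← hv.at_one, Function.update_eq_self]
  have hu1 := hu.update hF1
  refine .stepRight rfl (by simp) hu1 hv.at_zero hv.at_one ?_
  rw [Function.update_eq_self, Function.update_of_ne (by simp)]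
  have hu0 := hu1.update hF0
  refine .right rfl (by simp) hu0 hv.at_zero hv.at_one ?_
  refine .stepRight (b := _) rfl (by simp) hu0 hv.at_zero hv.at_one ?_
  rw [Function.update_eq_self]
  have hv' : Marks (update v 2 true) μ P (fun c => c = 2 ∨ c = 2 * m + 3) :=
    hv.update true le_rfl (by omega) (fun c h₁ h₂ => by
      rw [hS c h₁]; split_ifs <;> simp_all)
  refine .toM2 hu0 hv' (by omega) (by omega) hP (fun c hc => by omega) ?_ ?_
  · simpa using hFm
  · rw [Bool.or_false, Function.update_eq_self]
    exact H _ hv'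

/-- Initialising the data for the index `m`. -/
theorem Run.touchL {new rem : Bool} (hu : Mixed F F' u) (hv : Marks v μ P S)
    (hP : 2 * m + 3 < P) (hS : ∀ c, 2 ≤ c → ¬ S c)
    (hnew : (μ || (u (2 * m + 2) && u (2 * m + 3))) = new)
    (hrem : (u (2 * m + 2) && !u (2 * m + 3)) = rem)
    (hFG : F' (2 * m + 3) = false) (hFL : F' (2 * m + 2) = new)
    (hF1 : F' 1 = (u 1 || new)) (hF0 : F' 0 = (u 0 || rem))
    (H : ∀ v', Marks v' μ P (fun c => c = 2 ∨ c = 2 * m + 3) → Run x F F' μ E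
      ⟨⟨.toP, μ, r⟩, P, update (update (update (update u (2 * m + 3) false) (2 * m + 2) new)
        1 (u 1 || new)) 0 (u 0 || rem), v'⟩) :
    Run x F F' μ E ⟨⟨.touchL, μ, r⟩, 2 * m + 2, u, v⟩ := by
  refine .right rfl (by simp) hu hv.at_zero hv.at_one ?_
  refine .stepLeft rfl (by simp) hu hv.at_zero hv.at_one ?_
  have hv' : Marks (update v (2 * m + 3) true) μ P (fun c => c = 2 * m + 3) :=
    hv.update true (by omega) (by omega) (fun c h₁ h₂ => by
      have := hS c h₁; split_ifs <;> simp_all)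
  have huG := hu.update hFG
  rw [show 2 * m + 2 + 1 = 2 * m + 3 from rfl, hnew, hrem]
  refine .stepLeft rfl (by simp) huG hv'.at_zero hv'.at_one ?_
  rw [Function.update_eq_self]
  refine .toZ (m := m) (huG.update hFL) hv' (by omega) (by omega) hP (fun c _ => Iff.rfl)
    ?_ ?_ ?_ fun v' hv'' => ?_
  · simpa using hF1
  · simpa using hF0
  · simpa using hFG
  · simpa using H v' hv''

/-- Reading the input bit at `p` and going to the mark for `m`. -/
theorem Run.read (hu : Mixed F F' u) (hv : Marks v μ (p + 5) S)
    (hmp : 2 * m + 3 < p + 5) (hm : S (2 * m + 3)) (hS : ∀ c, 2 * m + 3 < c → ¬ S c)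
    (H : ∀ v', Marks v' μ (p + 6) S → Run x F F' μ E ⟨⟨.atL (x p), μ, r⟩, 2 * m + 2, u, v'⟩) :
    Run x F F' μ E ⟨⟨.toP, μ, r⟩, p + 5, u, v⟩ := by
  have h0 := hv.at_zero
  have h1 := hv.at_one
  refine .left (s' := ⟨.pb 4, μ, r⟩) (by rw [hv.at_P]; rfl) (by simp) hu h0 h1 ?_
  refine .left rfl (by simp) hu h0 h1 ?_
  refine .left rfl (by simp) hu h0 h1 ?_
  refine .left rfl (by simp) hu h0 h1 ?_
  refine .left rfl (by simp) hu h0 h1 ?_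
  refine .right rfl (by simp) hu h0 h1 ?_
  refine .right rfl (by simp) hu h0 h1 ?_
  refine .right rfl (by simp) hu h0 h1 ?_
  refine .right rfl (by simp) hu h0 h1 ?_
  refine .right rfl (by simp) hu h0 h1 ?_
  refine .stepRight rfl (by simp) hu h0 h1 ?_
  rw [Function.update_eq_self]
  refine .stepLeft rfl (by simp) hu (by simpa using h0) ?_ ?_
  · rwa [Function.update_of_ne (by omega)]
  rw [Function.update_eq_self]
  have hv' : Marks (update (update v (p + 5) false) (p + 6) true) μ (p + 6) S := by
    refine ⟨by simp, by simpa using h0, ?_, fun c h₁ h₂ => ?_⟩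
    · rwa [Function.update_of_ne (by omega), Function.update_of_ne (by omega)]
    · rw [Function.update_of_ne (by omega), Function.update_apply]
      split_ifs with hc
      · simpa using hS c (by omega)
      · exact hv.below c h₁ (by omega)
  refine .scanLeft (fun _ _ => rfl) (by simp) hu hv'.at_zero hv'.at_one (2 * m + 3) (by omega)
    (fun c h₁ h₂ => hv'.eq_false (by omega) (by omega) (hS c h₁)) ?_
  have hvm := hv'.eq_true (c := 2 * m + 3) (by omega) (by omega) hm
  exact .left (by erw [hvm]; rfl) (by simp) hu hv'.at_zero hv'.at_one (H _ hv')

end Run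

end CountThrough

end ITTM

namespace ITTM

namespace CountThrough

open Function (update)

variable {x : R} {F F' : ℕ → Bool} {μ : Bool} {E : Cfg → Prop}
variable {u v : ℕ → Bool} {P m a : ℕ} {r y : Bool}

/-- Processing an input bit concerning the indices `a < m`, up to the moment where the mark for
`a` has been advanced. -/
theorem Run.advance {ca cm : Bool} (hu : Mixed F F' u)
    (hv : Marks v μ P (fun c => c = 2 * a + 2 ∨ c = 2 * m + 3))
    (ham : a < m) (hP : 2 * m + 3 < P)
    (hca : condA μ r y (u (2 * m + 2)) = ca) (hcm : condM μ r y (u (2 * a + 2)) = cm)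
    (hFa : F' (2 * a + 3) = (u (2 * a + 3) || ca))
    (H : ∀ v', Marks v' μ P (fun c => c = 2 * a + 4 ∨ c = 2 * m + 3) → Run x F F' μ E
      ⟨⟨.chk cm, μ, r⟩, 2 * a + 5, update u (2 * a + 3) (u (2 * a + 3) || ca), v'⟩) :
    Run x F F' μ E ⟨⟨.atL y, μ, r⟩, 2 * m + 2, u, v⟩ := by
  have hvl := hv.eq_false (c := 2 * m + 2) (by omega) (by omega) (by omega)
  refine .left (s' := ⟨.toA y (u (2 * m + 2)), μ, r⟩) (by erw [hvl]; rfl) (by simp) hu hv.at_zero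
    hv.at_one ?_
  refine .scanLeft (fun _ _ => rfl) (by simp) hu hv.at_zero hv.at_one (2 * a + 2) (by omega)
    (fun c h₁ h₂ => hv.eq_false (by omega) (by omega) (by omega)) ?_
  have hva := hv.eq_true (c := 2 * a + 2) (by omega) (by omega) (by omega)
  refine .stepRight (by rw [hva]; rfl) (by simp) hu hv.at_zero hv.at_one ?_
  rw [Function.update_eq_self, hca, hcm]
  have hv₁ : Marks (update v (2 * a + 2) false) μ P (fun c => c = 2 * m + 3) :=
    hv.update false (by omega) (by omega) (fun c h₁ h₂ => by split_ifs <;> simp <;> omega)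
  refine .stepRight rfl (by simp) hu hv₁.at_zero hv₁.at_one ?_
  rw [Function.update_eq_self]
  have hu₁ := hu.update hFa
  refine .stepRight rfl (by simp) hu₁ hv₁.at_zero hv₁.at_one ?_
  rw [Function.update_eq_self]
  exact H _ (hv₁.update true (by omega) (by omega)
    (fun c h₁ h₂ => by split_ifs <;> simp <;> omega))

/-- Processing an input bit concerning the indices `a < m`. -/
theorem Run.offDiag {ca cm : Bool} (hu : Mixed F F' u)
    (hv : Marks v μ P (fun c => c = 2 * a + 2 ∨ c = 2 * m + 3))
    (ham : a < m) (hP : 2 * m + 3 < P)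
    (hca : condA μ r y (u (2 * m + 2)) = ca) (hcm : condM μ r y (u (2 * a + 2)) = cm)
    (hFa : F' (2 * a + 3) = (u (2 * a + 3) || ca))
    (hFm : F' (2 * m + 3) = (u (2 * m + 3) || cm)) (hF0 : F' 0 = u 0) (hF1 : F' 1 = u 1)
    (H : ∀ v' a' r', (a' = a + 1 ∧ r' = r ∧ (a + 1 < m ∨ r = true) ∨
        a' = 0 ∧ r' = true ∧ a + 1 = m ∧ r = false) →
      Marks v' μ P (fun c => c = 2 * a' + 2 ∨ c = 2 * m + 3) → Run x F F' μ E
      ⟨⟨.toP, μ, r'⟩, P, update (update u (2 * a + 3) (u (2 * a + 3) || ca))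
        (2 * m + 3) (u (2 * m + 3) || cm), v'⟩) :
    Run x F F' μ E ⟨⟨.atL y, μ, r⟩, 2 * m + 2, u, v⟩ := by
  refine .advance hu hv ham hP hca hcm hFa fun v₁ hv₁ => ?_
  have hu₁ := hu.update hFa
  have hum : update u (2 * a + 3) (u (2 * a + 3) || ca) (2 * m + 3) = u (2 * m + 3) :=
    Function.update_of_ne (by omega) _ _
  by_cases hm : a + 1 = m
  · have hvm := hv₁.eq_true (c := 2 * m + 3) (by omega) (by omega) (by omega)
    have hv₁m : update v₁ (2 * m + 3) true = v₁ := Function.update_eq_self_iff.2 hvm.symm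
    rw [show 2 * a + 5 = 2 * m + 3 by omega]
    cases r with
    | true =>
      refine .stepRight (by rw [hvm]; rfl) (by simp) hu₁ hv₁.at_zero hv₁.at_one ?_
      rw [hv₁m, hum]
      refine .toP (hu₁.update hFm) hv₁ (by omega) (by omega) (fun c hc => by omega) ?_
      exact H _ (a + 1) _ (by simp) hv₁
    | false =>
      refine .stepLeft (by erw [hvm]; rfl) (by simp) hu₁ hv₁.at_zero hv₁.at_one ?_
      change Run x F F' μ E ⟨_, _, update _ (2 * m + 3) _, update _ (2 * m + 3) _⟩
      rw [hv₁m, show 2 * m + 2 + 1 = 2 * m + 3 from rfl, hum]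
      have hu₂ := hu₁.update hFm
      refine .stepLeft rfl (by simp) hu₂ hv₁.at_zero hv₁.at_one ?_
      have hv₂ : Marks (update v₁ (2 * m + 2) false) μ P (fun c => c = 2 * m + 3) :=
        hv₁.update false (by omega) (by omega) (fun c h₁ h₂ => by split_ifs <;> simp <;> omega)
      rw [Function.update_eq_self]
      refine .toZ (m := m) hu₂ hv₂ (by omega) (by omega) hP (fun c _ => Iff.rfl) ?_ ?_ ?_
        fun v' hv' => ?_
      · rw [hF1, Function.update_of_ne (by omega), Function.update_of_ne (by omega)]; simp
      · rw [hF0, Function.update_of_ne (by omega), Function.update_of_ne (by omega)]; simp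
      · rw [hFm, Function.update_self]
      · simp only [Bool.or_false, Function.update_eq_self]
        exact H v' 0 true (by simp [hm]) hv'
  · have hvm := hv₁.eq_false (c := 2 * a + 5) (by omega) (by omega) (by omega)
    refine .right (s' := ⟨.toM2 cm, μ, r⟩) (by rw [hvm]; rfl) (by simp) hu₁ hv₁.at_zero
      hv₁.at_one ?_
    refine .toM2 (m := m) hu₁ hv₁ (by omega) (by omega) hP (fun c hc => by omega) ?_ ?_
    · rw [hum, hFm]
    · rw [hum]
      exact H _ (a + 1) _ (by left; refine ⟨rfl, rfl, .inl (by omega)⟩) hv₁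

/-- Processing the input bit at the diagonal pair `(m, m)`, and starting the next shell. -/
theorem Run.onDiag {cd new rem : Bool} (hu : Mixed F F' u)
    (hv : Marks v μ P (fun c => c = 2 * m + 2 ∨ c = 2 * m + 3)) (hP : 2 * m + 5 < P)
    (hcd : (y && (μ || u (2 * m + 2))) = cd)
    (hnew : (μ || (u (2 * m + 4) && u (2 * m + 5))) = new)
    (hrem : (u (2 * m + 4) && !u (2 * m + 5)) = rem)
    (hFm : F' (2 * m + 3) = (u (2 * m + 3) || cd))
    (hFG : F' (2 * m + 5) = false) (hFL : F' (2 * m + 4) = new)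
    (hF1 : F' 1 = (u 1 || new)) (hF0 : F' 0 = (u 0 || rem))
    (H : ∀ v', Marks v' μ P (fun c => c = 2 ∨ c = 2 * m + 5) → Run x F F' μ E
      ⟨⟨.toP, μ, false⟩, P, update (update (update (update (update u (2 * m + 3)
        (u (2 * m + 3) || cd)) (2 * m + 5) false) (2 * m + 4) new) 1 (u 1 || new)) 0
        (u 0 || rem), v'⟩) :
    Run x F F' μ E ⟨⟨.atL y, μ, r⟩, 2 * m + 2, u, v⟩ := by
  have hvl := hv.eq_true (c := 2 * m + 2) (by omega) (by omega) (by omega)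
  refine .stepRight (by rw [hvl]; rfl) (by simp) hu hv.at_zero hv.at_one ?_
  rw [Function.update_eq_self, hcd]
  have hv₁ : Marks (update v (2 * m + 2) false) μ P (fun c => c = 2 * m + 3) :=
    hv.update false (by omega) (by omega) (fun c h₁ h₂ => by split_ifs <;> simp <;> omega)
  refine .stepRight rfl (by simp) hu hv₁.at_zero hv₁.at_one ?_
  have hv₂ : Marks (update (update v (2 * m + 2) false) (2 * m + 3) false) μ P (fun _ => False) :=
    hv₁.update false (by omega) (by omega) (fun c h₁ h₂ => by split_ifs <;> simp_all)
  have hu₁ := hu.update hFm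
  refine .touchL (m := m + 1) hu₁ hv₂ (by omega) (fun c _ => id) (new := new) (rem := rem)
    ?_ ?_ hFG hFL ?_ ?_ fun v' hv' => ?_
  · rw [← hnew, Function.update_of_ne (by omega), Function.update_of_ne (by omega)]; rfl
  · rw [← hrem, Function.update_of_ne (by omega), Function.update_of_ne (by omega)]; rfl
  · rw [hF1, Function.update_of_ne (by omega)]
  · rw [hF0, Function.update_of_ne (by omega)]
  · rw [Function.update_of_ne (by omega), Function.update_of_ne (by omega)]
    exact H v' hv'

end CountThrough

end ITTM

namespace ITTM

namespace CountThrough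

open Function (update)

section Tape

variable (x : R) (μ : Bool) (f : ℕ → Bool)

/-- Whether the index `n` is still alive after being treated in a pass that starts with the scratch
tape `f`; in the first pass (`μ` true) all indices are. -/
def newL (n : ℕ) : Bool := μ || (f (2 * n + 2) && f (2 * n + 3))

/-- Whether the index `n` is removed in a pass that starts with the scratch tape `f`. -/
def remL (n : ℕ) : Bool := f (2 * n + 2) && !f (2 * n + 3)

/-- Whether the input bit at the pair `(a, b)` makes `n` bad, or, in the first pass, puts `n` into
the field. -/
def contr (a b n : ℕ) : Bool :=
  if μ then x (Nat.pair a b) && (decide (n = a) || decide (n = b))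
  else (x (Nat.pair a b) && (decide (n = b) && newL μ f a)) ||
    (!x (Nat.pair a b) && (decide (a ≠ b) && (decide (n = a) && newL μ f b)))

/-- The scratch tape after the first `p` input bits have been treated in a pass that starts with
the scratch tape `f`. -/
noncomputable def passTape (p : ℕ) : ℕ → Bool
  | 0 => f 0 || decide (∃ n ≤ Nat.sqrt p, remL f n = true)
  | 1 => decide (∃ n ≤ Nat.sqrt p, newL μ f n = true)
  | c + 2 =>
    if c / 2 ≤ Nat.sqrt p then
      if c % 2 = 0 then newL μ f (c / 2)
      else decide (∃ a b, Nat.pair a b < p ∧ contr x μ f a b (c / 2) = true)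
    else f (c + 2)

variable {x μ f}

theorem tape_ext {g g' : ℕ → Bool} (h0 : g 0 = g' 0) (h1 : g 1 = g' 1)
    (hL : ∀ n, g (2 * n + 2) = g' (2 * n + 2)) (hG : ∀ n, g (2 * n + 3) = g' (2 * n + 3)) :
    g = g' := by
  funext c
  match c with
  | 0 => exact h0
  | 1 => exact h1
  | c + 2 =>
    rcases Nat.even_or_odd' c with ⟨n, rfl | rfl⟩
    · exact hL n
    · exact hG n

theorem passTape_L (p n : ℕ) : passTape x μ f p (2 * n + 2) =
    if n ≤ Nat.sqrt p then newL μ f n else f (2 * n + 2) := by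
  simp [passTape]

theorem passTape_G (p n : ℕ) : passTape x μ f p (2 * n + 3) =
    if n ≤ Nat.sqrt p then decide (∃ a b, Nat.pair a b < p ∧ contr x μ f a b n = true)
    else f (2 * n + 3) := by
  have h1 : (2 * n + 1) / 2 = n := by omega
  have h2 : (2 * n + 1) % 2 = 1 := by omega
  simp [passTape, h1, h2]

theorem passTape_G_add_one {p n a b : ℕ} (hn : n ≤ Nat.sqrt p) (hab : Nat.pair a b = p) :
    passTape x μ f (p + 1) (2 * n + 3) = (passTape x μ f p (2 * n + 3) || contr x μ f a b n) := by
  rw [passTape_G, passTape_G, if_pos hn, if_pos (hn.trans (Nat.sqrt_le_sqrt (by omega))),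
    Bool.eq_iff_iff]
  simp only [Bool.or_eq_true, decide_eq_true_iff]
  constructor
  · rintro ⟨a', b', h, hc⟩
    rcases Nat.lt_succ_iff_lt_or_eq.1 h with h | h
    · exact .inl ⟨a', b', h, hc⟩
    · obtain ⟨rfl, rfl⟩ := Nat.pair_eq_pair.1 (h.trans hab.symm)
      exact .inr hc
  · rintro (⟨a', b', h, hc⟩ | hc)
    · exact ⟨a', b', h.trans (by omega), hc⟩
    · exact ⟨a, b, by omega, hc⟩

theorem contr_eq_false {a b n : ℕ} (ha : n ≠ a) (hb : n ≠ b) : contr x μ f a b n = false := by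
  simp [contr, ha, hb]

theorem passTape_add_one_of_sqrt_eq {p a m i j : ℕ} {ca cm : Bool} (ham : a < m)
    (hp : Nat.sqrt p = m) (hp' : Nat.sqrt (p + 1) = m)
    (hij : Nat.pair i j = p) (h : i = a ∧ j = m ∨ i = m ∧ j = a) (hca : contr x μ f i j a = ca)
    (hcm : contr x μ f i j m = cm) :
    passTape x μ f (p + 1) = update (update (passTape x μ f p) (2 * a + 3)
      (passTape x μ f p (2 * a + 3) || ca)) (2 * m + 3) (passTape x μ f p (2 * m + 3) || cm) := by
  refine tape_ext ?_ ?_ (fun n => ?_) fun n => ?_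
  · rw [Function.update_of_ne (by omega), Function.update_of_ne (by omega)]
    simp [passTape, hp, hp']
  · rw [Function.update_of_ne (by omega), Function.update_of_ne (by omega)]
    simp [passTape, hp, hp']
  · rw [Function.update_of_ne (by omega), Function.update_of_ne (by omega), passTape_L, passTape_L,
      hp, hp']
  · by_cases hm : n = m
    · rw [hm, Function.update_self, passTape_G_add_one hp.ge hij, hcm]
    rw [Function.update_of_ne (by omega)]
    by_cases ha : n = a
    · rw [ha, Function.update_self, passTape_G_add_one (by omega) hij, hca]
    rw [Function.update_of_ne (by omega)]
    by_cases hn : n ≤ m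
    · rw [passTape_G_add_one (hn.trans hp.ge) hij, contr_eq_false (by omega) (by omega),
        Bool.or_false]
    · rw [passTape_G, passTape_G, if_neg (by omega), if_neg (by omega)]

theorem exists_le_succ_or (q : ℕ → Bool) (m : ℕ) :
    decide (∃ n ≤ m + 1, q n = true) = (decide (∃ n ≤ m, q n = true) || q (m + 1)) := by
  rw [Bool.eq_iff_iff]
  simp only [Bool.or_eq_true, decide_eq_true_iff, Nat.le_succ_iff]
  aesop

theorem passTape_add_one_of_sqrt_lt {p m : ℕ} {cd : Bool}
    (hp : Nat.sqrt p = m) (hp' : Nat.sqrt (p + 1) = m + 1) (hm : Nat.pair m m = p)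
    (hcd : contr x μ f m m m = cd) :
    passTape x μ f (p + 1) = update (update (update (update (update (passTape x μ f p) (2 * m + 3)
      (passTape x μ f p (2 * m + 3) || cd)) (2 * m + 5) false) (2 * m + 4) (newL μ f (m + 1)))
      1 (passTape x μ f p 1 || newL μ f (m + 1))) 0 (passTape x μ f p 0 || remL f (m + 1)) := by
  refine tape_ext ?_ ?_ (fun n => ?_) fun n => ?_
  · rw [Function.update_self]
    simp only [passTape, hp, hp', exists_le_succ_or, Bool.or_assoc]
  · rw [Function.update_of_ne (by omega), Function.update_self]
    simp only [passTape, hp, hp', exists_le_succ_or]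
  · rw [Function.update_of_ne (by omega), Function.update_of_ne (by omega), passTape_L, hp']
    by_cases hn : n = m + 1
    · subst hn
      rw [show 2 * (m + 1) + 2 = 2 * m + 4 from rfl, Function.update_self, if_pos le_rfl]
    · rw [Function.update_of_ne (by omega), Function.update_of_ne (by omega),
        Function.update_of_ne (by omega), passTape_L, hp]
      exact if_congr (by omega) rfl rfl
  · rw [Function.update_of_ne (by omega), Function.update_of_ne (by omega),
      Function.update_of_ne (by omega)]
    by_cases hn : n = m + 1
    · subst hn
      rw [show 2 * (m + 1) + 3 = 2 * m + 5 from rfl, Function.update_self,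
        show 2 * m + 5 = 2 * (m + 1) + 3 from rfl, passTape_G, hp', if_pos le_rfl,
        decide_eq_false_iff_not]
      rintro ⟨a, b, h, hc⟩
      have hlt : max a b < m + 1 := by
        have h1 := Nat.max_sq_add_min_le_pair a b
        have h2 : Nat.pair m m = m * m + m + m := by simp [Nat.pair]
        nlinarith [Nat.zero_le (min a b)]
      rw [contr_eq_false (by omega) (by omega)] at hc
      exact absurd hc (by simp)
    rw [Function.update_of_ne (by omega)]
    by_cases hnm : n = m
    · rw [hnm, Function.update_self, passTape_G_add_one hp.ge hm, hcd]
    rw [Function.update_of_ne (by omega)]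
    by_cases hn' : n ≤ m
    · rw [passTape_G_add_one (hn'.trans hp.ge) hm, contr_eq_false (by omega) (by omega),
        Bool.or_false]
    · rw [passTape_G, passTape_G, if_neg (by omega), if_neg (by omega)]

end Tape

variable {x : R} {μ : Bool} {f : ℕ → Bool}

/-- The configurations in which the machine is about to treat the input bit at `p`. -/
def AtBit (x : R) (μ : Bool) (f : ℕ → Bool) (p : ℕ) (c : Cfg) : Prop :=
  ∃ m a r v, (r = true ∧ a ≤ m ∧ p = m * m + m + a ∨ r = false ∧ a < m ∧ p = m * m + a) ∧
    Marks v μ (p + 5) (fun c => c = 2 * a + 2 ∨ c = 2 * m + 3) ∧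
    c = ⟨⟨.toP, μ, r⟩, p + 5, passTape x μ f p, v⟩

theorem AtBit.run {p : ℕ} {c : Cfg} (h : AtBit x μ f p c) :
    Run x (passTape x μ f p) (passTape x μ f (p + 1)) μ (AtBit x μ f (p + 1)) c := by
  obtain ⟨m, a, r, v, hp, hv, rfl⟩ := h
  have hsq : Nat.sqrt p = m := by
    rcases hp with ⟨-, ha, rfl⟩ | ⟨-, ha, rfl⟩
    · rw [add_assoc]
      exact Nat.sqrt_add_eq m (by omega)
    · exact Nat.sqrt_add_eq m (by omega)
  have hmp : 2 * m + 3 < p + 5 := by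
    have : m * m ≤ p := by omega
    nlinarith [sq_nonneg ((m : ℤ) - 1)]
  have hu := Mixed.left (passTape x μ f p) (passTape x μ f (p + 1))
  have hL : ∀ n ≤ m, passTape x μ f p (2 * n + 2) = newL μ f n := fun n hn => by
    rw [passTape_L, if_pos (hn.trans hsq.ge)]
  refine .read hu hv hmp (.inr rfl) (fun c hc => by omega) fun v' hv' => ?_
  by_cases ham : a = m
  · subst ham
    obtain ⟨rfl, -, hp⟩ : r = true ∧ a ≤ a ∧ p = a * a + a + a := by
      rcases hp with h | h
      · exact h
      · omega
    have hsq' : Nat.sqrt (p + 1) = a + 1 := by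
      rw [show p + 1 = (a + 1) * (a + 1) by rw [hp]; ring, Nat.sqrt_eq]
    have hpair : Nat.pair a a = p := by simp [Nat.pair, hp]
    have hL' : passTape x μ f p (2 * a + 4) = f (2 * (a + 1) + 2) := by
      rw [show 2 * a + 4 = 2 * (a + 1) + 2 from rfl, passTape_L, if_neg (by omega)]
    have hG' : passTape x μ f p (2 * a + 5) = f (2 * (a + 1) + 3) := by
      rw [show 2 * a + 5 = 2 * (a + 1) + 3 from rfl, passTape_G, if_neg (by omega)]
    have hcd : (x p && (μ || newL μ f a)) = contr x μ f a a a := by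
      cases μ <;> simp [contr, hpair]
    have e := passTape_add_one_of_sqrt_lt hsq hsq' hpair hcd.symm
    refine .onDiag (new := newL μ f (a + 1)) (rem := remL f (a + 1)) hu hv' (by nlinarith)
      (by rw [hL a le_rfl]) (by rw [hL', hG']; rfl) (by rw [hL', hG']; rfl) ?_ ?_ ?_ ?_ ?_
      fun v'' hv'' => ?_
    · rw [e]; simp
    · rw [e]; simp
    · rw [e]; simp
    · rw [e]; simp
    · rw [e]; simp
    · rw [← e]
      exact .done ⟨a + 1, 0, false, v'', .inr ⟨rfl, by omega, by rw [hp]; ring⟩, hv'', rfl⟩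
  · have ham' : a < m := by omega
    have hsq' : Nat.sqrt (p + 1) = m := by
      rcases hp with ⟨-, ha, rfl⟩ | ⟨-, ha, rfl⟩
      · rw [add_assoc, add_assoc]
        exact Nat.sqrt_add_eq m (by omega)
      · rw [add_assoc]
        exact Nat.sqrt_add_eq m (by omega)
    have hn : ¬ m < a := by omega
    have hne : m ≠ a := by omega
    obtain ⟨i, j, hij, h, hca, hcm⟩ : ∃ i j, Nat.pair i j = p ∧ (i = a ∧ j = m ∨ i = m ∧ j = a) ∧
        condA μ r (x p) (newL μ f m) = contr x μ f i j a ∧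
        condM μ r (x p) (newL μ f a) = contr x μ f i j m := by
      rcases hp with ⟨rfl, ha, hp⟩ | ⟨rfl, ha, hp⟩
      · have hpair : Nat.pair m a = p := by simp [Nat.pair, hp, hn]
        refine ⟨m, a, hpair, .inr ⟨rfl, rfl⟩, ?_, ?_⟩ <;>
          cases μ <;> cases hxp : x p <;> simp [contr, condA, condM, hpair, ham, hne, hxp]
      · have hpair : Nat.pair a m = p := by simp [Nat.pair, hp, ham']
        refine ⟨a, m, hpair, .inl ⟨rfl, rfl⟩, ?_, ?_⟩ <;>
          cases μ <;> cases hxp : x p <;> simp [contr, condA, condM, hpair, ham, hne, hxp]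
    have e := passTape_add_one_of_sqrt_eq ham' hsq hsq' hij h hca.symm hcm.symm
    refine .offDiag hu hv' ham' (by omega) (by rw [hL m le_rfl]) (by rw [hL a (by omega)])
      ?_ ?_ ?_ ?_ fun v'' a' r' har hv'' => ?_
    · rw [e, Function.update_of_ne (by omega), Function.update_self]
    · rw [e, Function.update_self]
    · rw [e, Function.update_of_ne (by omega), Function.update_of_ne (by omega)]
    · rw [e, Function.update_of_ne (by omega), Function.update_of_ne (by omega)]
    · rw [← e]
      refine .done ⟨m, a', r', v'', ?_, hv'', rfl⟩
      rcases hp with ⟨rfl, ha, hp⟩ | ⟨rfl, ha, hp⟩ <;>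
        rcases har with ⟨rfl, rfl, h'⟩ | ⟨rfl, rfl, h', h''⟩
      · exact .inl ⟨rfl, by omega, by omega⟩
      · simp at h''
      · exact .inr ⟨rfl, by simpa using h', by omega⟩
      · exact .inl ⟨rfl, by omega, by omega⟩

end CountThrough

end ITTM

namespace ITTM

namespace CountThrough

open Function (update)

open Ordinal

variable {x : R} {μ : Bool} {f v : ℕ → Bool}

/-- Initialisation of a pass. -/
theorem Run.init (hf : f 1 = false) (h0 : v 0 = μ) (h1 : v 1 = true) :
    Run x f (passTape x μ f 0) μ (AtBit x μ f 0) ⟨⟨.j1, μ, true⟩, 1, f, v⟩ := by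
  have hu := Mixed.left f (passTape x μ f 0)
  refine .right rfl (by simp) hu h0 h1 ?_
  refine .stepRight rfl (by simp) hu h0 h1 ?_
  rw [Function.update_eq_self]
  refine .stepRight rfl (by simp) hu (by simpa using h0) (by simpa using h1) ?_
  rw [Function.update_eq_self]
  refine .stepRight rfl (by simp) hu (by simpa using h0) (by simpa using h1) ?_
  rw [Function.update_eq_self]
  refine .stepLeft rfl (by simp) hu (by simpa using h0) (by simpa using h1) ?_
  rw [Function.update_eq_self]
  have hv : Marks (update (update (update (update v (1 + 1) false) (1 + 1 + 1) false)
      (1 + 1 + 1 + 1) false) (1 + 1 + 1 + 1 + 1) true) μ 5 (fun _ => False) := by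
    refine ⟨by simp, by simpa using h0, by simpa using h1, fun c hc hc' => ?_⟩
    interval_cases c <;> simp
  refine .left rfl (by simp) hu hv.at_zero hv.at_one ?_
  refine .left rfl (by simp) hu hv.at_zero hv.at_one ?_
  have e : passTape x μ f 0 = update (update (update (update f 3 false) 2 (newL μ f 0)) 1
      (f 1 || newL μ f 0)) 0 (f 0 || remL f 0) := by
    refine tape_ext ?_ ?_ (fun n => ?_) fun n => ?_
    · simp [passTape]
    · simp [passTape, hf]
    · rw [passTape_L]
      rcases n with - | n
      · simp
      · rw [if_neg (by simp), Function.update_of_ne (by omega), Function.update_of_ne (by omega),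
          Function.update_of_ne (by omega), Function.update_of_ne (by omega)]
    · rw [passTape_G]
      rcases n with - | n
      · simp
      · rw [if_neg (by simp), Function.update_of_ne (by omega), Function.update_of_ne (by omega),
          Function.update_of_ne (by omega), Function.update_of_ne (by omega)]
  refine .touchL (m := 0) (new := newL μ f 0) (rem := remL f 0) hu hv (by omega) (fun c _ => id)
    rfl rfl ?_ ?_ ?_ ?_ fun v' hv' => ?_
  · rw [e]; simp
  · rw [e]; simp
  · rw [e]; simp
  · rw [e]; simp
  · exact .done ⟨0, 0, true, v', .inl ⟨rfl, le_rfl, rfl⟩, hv', by rw [e]⟩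

theorem AtBit.exists_good {p : ℕ} {c : Cfg} (h : AtBit x μ f p c) (i : ℕ) :
    ∃ p' ≥ p, Good (passTape x μ f p') (passTape x μ f (p' + 1)) μ ((cstep x)^[i] c) := by
  induction i using Nat.strong_induction_on generalizing p c with
  | _ i ih =>
    obtain ⟨k, hk, hg⟩ := h.run
    by_cases hik : i < k
    · exact ⟨p, le_rfl, hg i hik⟩
    · have hk0 : k ≠ 0 := by
        rintro rfl
        obtain ⟨_, _, _, _, -, -, rfl⟩ := h
        obtain ⟨_, _, _, _, -, -, e⟩ := hk
        have := congrArg Cfg.hd e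
        simp at this
      obtain ⟨p', hp', hg'⟩ := ih (i - k) (by omega) hk
      rw [← Function.iterate_add_apply, Nat.sub_add_cancel (by omega)] at hg'
      exact ⟨p', by omega, hg'⟩

theorem AtBit.reaches {p : ℕ} {c : Cfg} (h : AtBit x μ f p c) (q : ℕ) (hq : p ≤ q) :
    ∃ k, AtBit x μ f q ((cstep x)^[k] c) := by
  induction q, hq using Nat.le_induction with
  | base => exact ⟨0, h⟩
  | succ q _ ih =>
    obtain ⟨k, hk⟩ := ih
    obtain ⟨k', hk', -⟩ := hk.run
    exact ⟨k' + k, by rwa [Function.iterate_add_apply]⟩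

theorem pass_good (hf : f 1 = false) (h0 : v 0 = μ) (h1 : v 1 = true) (i : ℕ) :
    ∃ F F', (F = f ∨ ∃ p, F = passTape x μ f p) ∧ (∃ p, F' = passTape x μ f p) ∧
      Good F F' μ ((cstep x)^[i] ⟨⟨.j1, μ, true⟩, 1, f, v⟩) := by
  obtain ⟨k, hk, hg⟩ := Run.init (x := x) hf h0 h1
  by_cases hik : i < k
  · exact ⟨_, _, .inl rfl, ⟨_, rfl⟩, hg i hik⟩
  · obtain ⟨p', -, hg'⟩ := hk.exists_good (i - k)
    rw [← Function.iterate_add_apply, Nat.sub_add_cancel (by omega)] at hg'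
    exact ⟨_, _, .inr ⟨_, rfl⟩, ⟨_, rfl⟩, hg'⟩

theorem pass_L_le (hf : f 1 = false) (h0 : v 0 = μ) (h1 : v 1 = true)
    (i n : ℕ) (hμ : μ = false) (hn : f (2 * n + 2) = false) :
    ((cstep x)^[i] ⟨⟨.j1, μ, true⟩, 1, f, v⟩).u (2 * n + 2) = false := by
  obtain ⟨F, F', hF, ⟨p', rfl⟩, -, hm, -⟩ := pass_good (x := x) hf h0 h1 i
  have hp : ∀ p, passTape x μ f p (2 * n + 2) = false := fun p => by
    simp [passTape_L, newL, hμ, hn]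
  rcases hm (2 * n + 2) with e | e
  · rw [e]
    rcases hF with rfl | ⟨p, rfl⟩
    · exact hn
    · exact hp p
  · rw [e, hp]

theorem pass_eventually (hf : f 1 = false) (h0 : v 0 = μ) (h1 : v 1 = true)
    {c : ℕ} {b : Bool} {q : ℕ} (hq : ∀ p ≥ q, passTape x μ f p c = b) :
    ∃ j, ∀ i ≥ j, ((cstep x)^[i] ⟨⟨.j1, μ, true⟩, 1, f, v⟩).u c = b := by
  obtain ⟨k, hk, -⟩ := Run.init (x := x) hf h0 h1
  obtain ⟨k', hk'⟩ := hk.reaches q (Nat.zero_le q)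
  refine ⟨k' + k, fun i hi => ?_⟩
  obtain ⟨p, hp, -, hm, -⟩ := hk'.exists_good (i - (k' + k))
  rw [← Function.iterate_add_apply, ← Function.iterate_add_apply,
    show i - (k' + k) + k' + k = i by omega] at hm
  rcases hm c with e | e
  · rw [e, hq p hp]
  · rw [e, hq (p + 1) (by omega)]

variable {α : Ordinal.{0}} {k : ℕ}

theorem conf_pass_u (hf : f 1 = false) (h0 : v 0 = μ) (h1 : v 1 = true)
    (hk : (cstep x)^[k] (conf x α) = ⟨⟨.j1, μ, true⟩, 1, f, v⟩)
    {c : ℕ} {b : Bool} {q : ℕ} (hq : ∀ p ≥ q, passTape x μ f p c = b) :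
    (conf x (α + ω)).u c = b := by
  obtain ⟨j, hj⟩ := pass_eventually (x := x) hf h0 h1 hq
  refine conf_add_omega0_u x (j := j + k) fun i hi => ?_
  obtain ⟨l, rfl⟩ := Nat.exists_eq_add_of_le' hi
  rw [← add_assoc, Function.iterate_add_apply, hk]
  exact hj _ (by omega)

theorem conf_pass_v_zero (hf : f 1 = false) (h0 : v 0 = μ) (h1 : v 1 = true)
    (hk : (cstep x)^[k] (conf x α) = ⟨⟨.j1, μ, true⟩, 1, f, v⟩) :
    (conf x (α + ω)).v 0 = μ := by
  refine conf_add_omega0_v x (j := k) fun i hi => ?_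
  obtain ⟨l, rfl⟩ := Nat.exists_eq_add_of_le' hi
  rw [Function.iterate_add_apply, hk]
  obtain ⟨_, _, _, _, hg⟩ := pass_good (x := x) hf h0 h1 l
  exact hg.2.2.1

theorem conf_pass_v_one (hf : f 1 = false) (h0 : v 0 = μ) (h1 : v 1 = true)
    (hk : (cstep x)^[k] (conf x α) = ⟨⟨.j1, μ, true⟩, 1, f, v⟩) :
    (conf x (α + ω)).v 1 = true := by
  refine conf_add_omega0_v x (j := k) fun i hi => ?_
  obtain ⟨l, rfl⟩ := Nat.exists_eq_add_of_le' hi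
  rw [Function.iterate_add_apply, hk]
  obtain ⟨_, _, _, _, hg⟩ := pass_good (x := x) hf h0 h1 l
  exact hg.2.2.2

theorem conf_pass_zero (hf : f 1 = false) (h0 : v 0 = μ) (h1 : v 1 = true)
    (hk : (cstep x)^[k] (conf x α) = ⟨⟨.j1, μ, true⟩, 1, f, v⟩) :
    (conf x (α + ω)).u 0 = (f 0 || decide (∃ n, remL f n = true)) := by
  by_cases h : ∃ n, remL f n = true
  · obtain ⟨n, hn⟩ := h
    refine conf_pass_u hf h0 h1 hk (q := n * n) fun p hp => ?_
    have h1 : ∃ n ≤ Nat.sqrt p, remL f n = true := ⟨n, Nat.le_sqrt.2 hp, hn⟩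
    have h2 : ∃ n, remL f n = true := ⟨n, hn⟩
    simp only [passTape, h1, h2]
  · refine conf_pass_u hf h0 h1 hk (q := 0) fun p hp => ?_
    have h1 : ¬ ∃ n ≤ Nat.sqrt p, remL f n = true := fun ⟨n, _, hn⟩ => h ⟨n, hn⟩
    simp only [passTape, h1, h]

theorem conf_pass_one (hf : f 1 = false) (h0 : v 0 = μ) (h1 : v 1 = true)
    (hk : (cstep x)^[k] (conf x α) = ⟨⟨.j1, μ, true⟩, 1, f, v⟩) :
    (conf x (α + ω)).u 1 = decide (∃ n, newL μ f n = true) := by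
  by_cases h : ∃ n, newL μ f n = true
  · obtain ⟨n, hn⟩ := h
    refine conf_pass_u hf h0 h1 hk (q := n * n) fun p hp => ?_
    have h1 : ∃ n ≤ Nat.sqrt p, newL μ f n = true := ⟨n, Nat.le_sqrt.2 hp, hn⟩
    have h2 : ∃ n, newL μ f n = true := ⟨n, hn⟩
    simp only [passTape, h1, h2]
  · refine conf_pass_u hf h0 h1 hk (q := 0) fun p hp => ?_
    have h1 : ¬ ∃ n ≤ Nat.sqrt p, newL μ f n = true := fun ⟨n, _, hn⟩ => h ⟨n, hn⟩
    simp only [passTape, h1, h]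

theorem conf_pass_L (hf : f 1 = false) (h0 : v 0 = μ) (h1 : v 1 = true)
    (hk : (cstep x)^[k] (conf x α) = ⟨⟨.j1, μ, true⟩, 1, f, v⟩) (n : ℕ) :
    (conf x (α + ω)).u (2 * n + 2) = newL μ f n := by
  refine conf_pass_u hf h0 h1 hk (q := n * n) fun p hp => ?_
  rw [passTape_L, if_pos (Nat.le_sqrt.2 hp)]

theorem conf_pass_G (hf : f 1 = false) (h0 : v 0 = μ) (h1 : v 1 = true)
    (hk : (cstep x)^[k] (conf x α) = ⟨⟨.j1, μ, true⟩, 1, f, v⟩) (n : ℕ) :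
    (conf x (α + ω)).u (2 * n + 3) = decide (∃ a b, contr x μ f a b n = true) := by
  by_cases h : ∃ a b, contr x μ f a b n = true
  · obtain ⟨a, b, hab⟩ := h
    refine conf_pass_u hf h0 h1 hk (q := n * n + Nat.pair a b + 1) fun p hp => ?_
    rw [passTape_G, if_pos (Nat.le_sqrt.2 (by omega))]
    have h1 : ∃ a b, Nat.pair a b < p ∧ contr x μ f a b n = true := ⟨a, b, by omega, hab⟩
    have h2 : ∃ a b, contr x μ f a b n = true := ⟨a, b, hab⟩
    simp only [h1, h2]
  · refine conf_pass_u hf h0 h1 hk (q := n * n) fun p hp => ?_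
    rw [passTape_G, if_pos (Nat.le_sqrt.2 (by omega))]
    have h1 : ¬ ∃ a b, Nat.pair a b < p ∧ contr x μ f a b n = true :=
      fun ⟨a, b, _, hab⟩ => h ⟨a, b, hab⟩
    simp only [h1, h]

end CountThrough

end ITTM

namespace ITTM

namespace CountThrough

variable (x : R)

/-- The indices that are above an element of `S`, or fail to be below some other element of `S`, in
the relation coded by `x`. -/
def bad (S : Set ℕ) : Set ℕ := {n | ∃ k ∈ S, rel x k n ∨ (k ≠ n ∧ ¬ rel x n k)}

/-- The indices surviving `α` rounds of removing all those that are not bad. -/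
noncomputable def surv (α : Ordinal.{0}) : Set ℕ :=
  {n | n ∈ field x ∧ ∀ β, ∀ _ : β < α, n ∈ bad x (surv β)}
termination_by α

variable {x} {α β : Ordinal.{0}} {n : ℕ}

theorem mem_surv : n ∈ surv x α ↔ n ∈ field x ∧ ∀ β < α, n ∈ bad x (surv x β) := by
  rw [surv]
  rfl

theorem surv_anti (h : α ≤ β) : surv x β ⊆ surv x α := fun n hn => by
  rw [mem_surv] at hn ⊢
  exact ⟨hn.1, fun γ hγ => hn.2 γ (hγ.trans_le h)⟩

theorem mem_surv_zero : n ∈ surv x 0 ↔ n ∈ field x := by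
  simp [mem_surv]

theorem mem_surv_add_one : n ∈ surv x (α + 1) ↔ n ∈ surv x α ∧ n ∈ bad x (surv x α) := by
  constructor
  · intro h
    exact ⟨surv_anti le_self_add h, (mem_surv.1 h).2 α (lt_add_one α)⟩
  · rintro ⟨h, h'⟩
    refine mem_surv.2 ⟨(mem_surv.1 h).1, fun β hβ => ?_⟩
    rcases (Order.lt_add_one_iff.1 hβ).lt_or_eq with hβ | rfl
    · exact (mem_surv.1 h).2 β hβ
    · exact h'

theorem forall_lt_add_one_mem_surv : (∀ β < α + 1, n ∈ surv x β) ↔ n ∈ surv x α :=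
  ⟨fun h => h α (lt_add_one α), fun h _ hβ => surv_anti (Order.lt_add_one_iff.1 hβ) h⟩

theorem forall_lt_limit_mem_surv (hα : Order.IsSuccLimit α) :
    (∀ β < α, n ∈ surv x β) ↔ n ∈ surv x α := by
  refine ⟨fun h => mem_surv.2 ⟨(mem_surv.1 (h 0 hα.bot_lt)).1, fun β hβ => ?_⟩,
    fun h β hβ => surv_anti hβ.le h⟩
  exact (mem_surv_add_one.1 (h (β + 1) (hα.add_one_lt hβ))).2

theorem exists_surv_add_one_eq (x : R) : ∃ α : Ordinal.{0}, surv x (α + 1) = surv x α := by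
  have h := not_injective_of_ordinal (surv x)
  simp only [Function.Injective, not_forall] at h
  obtain ⟨α, β, e, hne⟩ := h
  wlog hlt : α < β generalizing α β
  · exact this β α e.symm (Ne.symm hne) (lt_of_le_of_ne (not_lt.1 hlt) (Ne.symm hne))
  · exact ⟨α, (surv_anti le_self_add).antisymm
      (e.le.trans (surv_anti (Order.add_one_le_of_lt hlt)))⟩

/-- If all indices get removed, then the relation is a well-order. -/
theorem codesWellOrder_of_surv_eq_empty (h : surv x β = ∅) : codesWellOrder x := by
  have hex : ∀ n : field x, ∃ ε, n.1 ∉ bad x (surv x ε) := fun n => by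
    have hn : n.1 ∉ surv x β := by simp [h]
    rw [mem_surv] at hn
    push Not at hn
    obtain ⟨ε, -, hε⟩ := hn n.2
    exact ⟨ε, hε⟩
  let ρ (n : field x) : Ordinal.{0} := sInf {ε | n.1 ∉ bad x (surv x ε)}
  have hρ : ∀ n, n.1 ∉ bad x (surv x (ρ n)) := fun n => csInf_mem (hex n)
  have hmem : ∀ n, n.1 ∈ surv x (ρ n) := fun n => mem_surv.2 ⟨n.2, fun δ hδ => by
    by_contra hc
    exact notMem_of_lt_csInf' hδ hc⟩
  have hlt : ∀ k n, relOn x k n → ρ k < ρ n := fun k n hkn => by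
    by_contra hc
    exact hρ n ⟨k.1, surv_anti (not_lt.1 hc) (hmem k), .inl hkn⟩
  have hrel : ∀ a b, ρ a ≤ ρ b → a ≠ b → relOn x a b := fun a b hab hne => by
    by_contra hc
    exact hρ a ⟨b.1, surv_anti hab (hmem b), .inr ⟨fun e => hne (Subtype.ext e.symm), hc⟩⟩
  have hwf : WellFounded (relOn x) :=
    Subrelation.wf (fun {k n} hkn => hlt k n hkn) (InvImage.wf ρ Ordinal.lt_wf)
  exact
    { wf := hwf
      trichotomous := fun a b hab hba => by
        by_contra hne
        rcases le_total (ρ a) (ρ b) with h | h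
        · exact hab (hrel a b h hne)
        · exact hba (hrel b a h (Ne.symm hne)) }

/-- If the process of removing indices stops before all of them are removed, then the relation is
not a well-order. -/
theorem not_codesWellOrder_of_surv_add_one_eq (h : surv x (β + 1) = surv x β)
    (hne : (surv x β).Nonempty) : ¬ codesWellOrder x := by
  intro hwo
  obtain ⟨k, hk⟩ := hne
  obtain ⟨n, hn, hmin⟩ := hwo.wf.has_min {n : field x | n.1 ∈ surv x β}
    ⟨⟨k, (mem_surv.1 hk).1⟩, hk⟩
  obtain ⟨j, hj, hb⟩ := (mem_surv_add_one.1 (h.ge hn)).2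
  have hj' := hmin ⟨j, (mem_surv.1 hj).1⟩ hj
  rcases hb with hb | ⟨hjn, hb⟩
  · exact hj' hb
  · exact hjn (congrArg Subtype.val (hwo.trichotomous _ _ hj' hb))

end CountThrough

end ITTM

namespace ITTM

namespace CountThrough

open Function (update)

open Ordinal

/-- The stage at which the machine has completed its first pass and `α` further passes. -/
noncomputable def passEnd (α : Ordinal.{0}) : Ordinal.{0} := ω + ω * α

theorem passEnd_zero : passEnd 0 = 0 + ω := by simp [passEnd]

theorem passEnd_add_one (α : Ordinal.{0}) : passEnd (α + 1) = passEnd α + ω := by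
  rw [passEnd, passEnd, mul_add_one, add_assoc]

theorem passEnd_strictMono : StrictMono passEnd := fun α β h => by
  simpa [passEnd, omega0_pos] using h

theorem isSuccLimit_passEnd {α : Ordinal.{0}} (h : Order.IsSuccLimit α) :
    Order.IsSuccLimit (passEnd α) :=
  isSuccLimit_add _ (isSuccLimit_mul_right omega0_pos h)

theorem passEnd_add_nat_lt {α β : Ordinal.{0}} (h : α < β) (i : ℕ) : passEnd α + i < passEnd β := by
  calc passEnd α + i < passEnd α + ω := by simp
    _ = passEnd (α + 1) := (passEnd_add_one α).symm
    _ ≤ passEnd β := passEnd_strictMono.monotone (Order.add_one_le_of_lt h)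

theorem eq_of_lt_passEnd {α γ : Ordinal.{0}} (h : γ < passEnd α) :
    (∃ i : ℕ, γ = i) ∨ ∃ β < α, ∃ i : ℕ, γ = passEnd β + i := by
  rcases lt_or_ge γ ω with hγ | hγ
  · exact .inl (lt_omega0.1 hγ)
  · right
    have h' : γ - ω < ω * α := by
      rwa [← add_lt_add_iff_left ω, Ordinal.add_sub_cancel_of_le hγ]
    obtain ⟨q, hq, r, hr, e⟩ := lt_mul_iff.1 h'
    obtain ⟨i, rfl⟩ := lt_omega0.1 hr
    exact ⟨q, hq, i, by rw [passEnd, add_assoc, ← e, Ordinal.add_sub_cancel_of_le hγ]⟩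

theorem eq_of_lt_add_omega0 {α γ : Ordinal.{0}} (h : γ < α + ω) : γ < α ∨ ∃ i : ℕ, γ = α + i := by
  rcases lt_or_ge γ α with hγ | hγ
  · exact .inl hγ
  · obtain ⟨i, hi⟩ := lt_omega0.1 (show γ - α < ω from sub_lt_of_lt_add h omega0_pos)
    exact .inr ⟨i, by rw [← hi, Ordinal.add_sub_cancel_of_le hγ]⟩

variable {x : R} {α β : Ordinal.{0}}

/-- The content of the tapes after the first pass and `α` further passes. -/
structure Inv (x : R) (α : Ordinal.{0}) : Prop where
  st : (conf x (passEnd α)).st = ⟨.lim, false, true⟩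
  hd : (conf x (passEnd α)).hd = 0
  mark : (conf x (passEnd α)).v 1 = true
  alive : ∀ n, (conf x (passEnd α)).u (2 * n + 2) = true ↔ ∀ β < α, n ∈ surv x β
  alive_bad : ∀ n, (conf x (passEnd α)).u (2 * n + 2) = true ∧
    (conf x (passEnd α)).u (2 * n + 3) = true ↔ n ∈ surv x α
  flash : (conf x (passEnd α)).v 0 = true ↔ ∀ β, α ≠ β + 1
  changed : (conf x (passEnd α)).u 0 = true ↔ ¬ ∃ β, α = β + 1 + 1 ∧ surv x (β + 1) = surv x β
  nonempty : ∀ β, α = β + 1 → ((conf x (passEnd α)).u 1 = true ↔ (surv x β).Nonempty)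
  quiet : ∀ γ < passEnd α, (conf x γ).st.ctl ≠ .halt

/-- The scratch tape after the first steps of a pass. -/
def startTape (c : Cfg) : ℕ → Bool := update (update c.u 1 false) 0 (c.v 0)

theorem startTape_of_two_le (c : Cfg) {n : ℕ} (hn : 2 ≤ n) : startTape c n = c.u n := by
  rw [startTape, Function.update_of_ne (by omega), Function.update_of_ne (by omega)]

/-- The first steps of a pass. -/
theorem pass_start {c : Cfg} (hst : c.st = ⟨.lim, false, true⟩) (hhd : c.hd = 0)
    (hmark : c.v 1 = true) (hu : c.u 0 = true) :
    ∃ v, v 0 = false ∧ v 1 = true ∧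
      (cstep x)^[5] c = ⟨⟨.j1, false, true⟩, 1, startTape c, v⟩ ∧
      ((cstep x)^[3] c).v 0 = true ∧
      ∀ i < 5, ((cstep x)^[i] c).st.ctl ≠ .halt ∧
        ∀ n ≥ 2, ((cstep x)^[i] c).u n = c.u n := by
  obtain ⟨s, h, u, v⟩ := c
  subst hst hhd
  dsimp only at hmark hu
  refine ⟨update (update v 1 true) 0 false, by simp, by simp, ?_, ?_, fun i hi => ?_⟩
  · simp [cstep, δ, hmark, hu, startTape]
    constructor <;> funext n <;> simp only [Function.update_apply] <;> split_ifs <;> rfl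
  · simp [cstep, δ, hmark, hu]
  · refine ⟨?_, fun n hn => ?_⟩
    · interval_cases i <;> simp [cstep, δ, hmark, hu]
    · have hn0 : n ≠ 0 := by omega
      have hn1 : n ≠ 1 := by omega
      interval_cases i <;> simp [cstep, δ, hmark, hu, hn0, hn1]

/-- No halting, and no revival of removed indices, during a pass. -/
theorem Inv.pass (h : Inv x α) (hD : (conf x (passEnd α)).u 0 = true) (i : ℕ) :
    (conf x (passEnd α + i)).st.ctl ≠ .halt ∧ ∀ n, (conf x (passEnd α)).u (2 * n + 2) = false →
      (conf x (passEnd α + i)).u (2 * n + 2) = false := by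
  obtain ⟨v, hv0, hv1, hk, -, hi⟩ := pass_start (x := x) h.st h.hd h.mark hD
  rw [conf_add_nat]
  by_cases hi5 : i < 5
  · exact ⟨(hi i hi5).1, fun n hn => by rw [(hi i hi5).2 _ (by omega), hn]⟩
  · obtain ⟨j, rfl⟩ := Nat.exists_eq_add_of_le' (not_lt.1 hi5)
    rw [Function.iterate_add_apply, hk]
    have hf : startTape (conf x (passEnd α)) 1 = false := by simp [startTape]
    obtain ⟨_, _, _, _, hg⟩ := pass_good (x := x) hf hv0 hv1 j
    exact ⟨hg.1, fun n hn => pass_L_le hf hv0 hv1 j n rfl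
      (by rw [startTape_of_two_le _ (by omega), hn])⟩

theorem Inv.zero (x : R) : Inv x 0 := by
  have hk : (cstep x)^[3] (conf x 0) =
      ⟨⟨.j1, true, true⟩, 1, update zeroR 0 true, update (update zeroR 1 true) 0 true⟩ := by
    simp [conf_zero, cstep, δ]
    constructor <;> funext n <;> simp only [Function.update_apply] <;> split_ifs <;> simp_all
  have hf : update zeroR 0 true 1 = false := rfl
  have hv0 : update (update zeroR 1 true) 0 true 0 = true := rfl
  have hv1 : update (update zeroR 1 true) 0 true 1 = true := rfl
  have hlim := conf_limit x (isSuccLimit_add_omega0 0)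
  have hL : ∀ n, (conf x (0 + ω)).u (2 * n + 2) = true := fun n => by
    rw [conf_pass_L hf hv0 hv1 hk]
    simp [newL]
  constructor
  case st => rw [passEnd_zero, hlim]
  case hd => rw [passEnd_zero, hlim]
  case mark => rw [passEnd_zero, conf_pass_v_one hf hv0 hv1 hk]
  case alive =>
    intro n
    rw [passEnd_zero]
    exact iff_of_true (hL n) fun β hβ => absurd hβ (by simp)
  case alive_bad =>
    intro n
    rw [passEnd_zero, conf_pass_G hf hv0 hv1 hk, decide_eq_true_iff, mem_surv_zero]
    simp only [hL, true_and, contr, if_true, Bool.and_eq_true, Bool.or_eq_true, decide_eq_true_iff]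
    constructor
    · rintro ⟨a, b, h, rfl | rfl⟩
      · exact ⟨b, .inl h⟩
      · exact ⟨a, .inr h⟩
    · rintro ⟨k, h | h⟩
      · exact ⟨n, k, h, .inl rfl⟩
      · exact ⟨k, n, h, .inr rfl⟩
  case flash =>
    rw [passEnd_zero, conf_pass_v_zero hf hv0 hv1 hk]
    exact iff_of_true rfl fun β h => absurd h.symm (by simp)
  case changed =>
    rw [passEnd_zero, conf_pass_zero hf hv0 hv1 hk]
    refine iff_of_true (by simp) ?_
    rintro ⟨β, h, -⟩
    exact absurd h.symm (by simp)
  case nonempty => exact fun β hβ => absurd hβ.symm (by simp)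
  case quiet =>
    intro γ hγ
    rw [passEnd_zero] at hγ
    rcases eq_of_lt_add_omega0 hγ with h | ⟨i, rfl⟩
    · simp at h
    rw [conf_add_nat]
    by_cases hi : i < 3
    · interval_cases i <;> simp [conf_zero, cstep, δ]
    · obtain ⟨j, rfl⟩ := Nat.exists_eq_add_of_le' (not_lt.1 hi)
      rw [Function.iterate_add_apply, hk]
      obtain ⟨_, _, _, _, hg⟩ := pass_good (x := x) hf hv0 hv1 j
      exact hg.1

theorem Inv.add_one (h : Inv x α) (hD : (conf x (passEnd α)).u 0 = true) : Inv x (α + 1) := by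
  obtain ⟨v, hv0, hv1, hk, -, hi⟩ := pass_start (x := x) h.st h.hd h.mark hD
  have hf : startTape (conf x (passEnd α)) 1 = false := by simp [startTape]
  have hlim := conf_limit x (isSuccLimit_add_omega0 (passEnd α))
  have hnew : ∀ n, newL false (startTape (conf x (passEnd α))) n = true ↔ n ∈ surv x α := by
    intro n
    rw [← h.alive_bad]
    simp [newL, startTape_of_two_le]
  constructor
  case st => rw [passEnd_add_one, hlim]
  case hd => rw [passEnd_add_one, hlim]
  case mark => rw [passEnd_add_one, conf_pass_v_one hf hv0 hv1 hk]
  case alive =>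
    intro n
    rw [passEnd_add_one, conf_pass_L hf hv0 hv1 hk, hnew, forall_lt_add_one_mem_surv]
  case alive_bad =>
    intro n
    rw [passEnd_add_one, conf_pass_L hf hv0 hv1 hk, conf_pass_G hf hv0 hv1 hk, hnew,
      mem_surv_add_one, decide_eq_true_iff]
    refine and_congr_right fun _ => ?_
    simp only [contr, Bool.false_eq_true, if_false, Bool.or_eq_true, Bool.and_eq_true, hnew,
      decide_eq_true_iff, Bool.not_eq_true']
    constructor
    · rintro ⟨a, b, ⟨h, rfl, ha⟩ | ⟨h, hab, rfl, hb⟩⟩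
      · exact ⟨a, ha, .inl h⟩
      · exact ⟨b, hb, .inr ⟨hab.symm, by simp [rel, h]⟩⟩
    · rintro ⟨k, hk, h | ⟨hkn, h⟩⟩
      · exact ⟨k, n, .inl ⟨h, rfl, hk⟩⟩
      · exact ⟨n, k, .inr ⟨by simpa [rel] using h, hkn.symm, rfl, hk⟩⟩
  case flash =>
    rw [passEnd_add_one, conf_pass_v_zero hf hv0 hv1 hk]
    simp
  case changed =>
    rw [passEnd_add_one, conf_pass_zero hf hv0 hv1 hk, Bool.or_eq_true, decide_eq_true_iff,
      show startTape (conf x (passEnd α)) 0 = (conf x (passEnd α)).v 0 by simp [startTape], h.flash]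
    have hrem : ∀ n, remL (startTape (conf x (passEnd α))) n = true ↔
        (∀ β < α, n ∈ surv x β) ∧ n ∉ surv x α := fun n => by
      rw [← h.alive_bad, ← h.alive]
      simp [remL, startTape_of_two_le]
      tauto
    simp only [hrem]
    by_cases hα : ∃ β, α = β + 1
    · obtain ⟨β, rfl⟩ := hα
      simp only [forall_lt_add_one_mem_surv]
      constructor
      · rintro (h | ⟨n, h1, h2⟩) ⟨γ, e', e⟩
        · exact h β rfl
        · obtain rfl : β = γ := by simpa using e'
          exact h2 (e ▸ h1)
      · intro h
        right
        by_contra hc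
        push Not at hc
        exact h ⟨β, rfl, (surv_anti le_self_add).antisymm hc⟩
    · push Not at hα
      refine iff_of_true (.inl hα) ?_
      rintro ⟨β, e, -⟩
      exact hα β (by simpa using e)
  case nonempty =>
    intro β hβ
    obtain rfl : α = β := by simpa using hβ
    rw [passEnd_add_one, conf_pass_one hf hv0 hv1 hk, decide_eq_true_iff]
    simp only [hnew]
    rfl
  case quiet =>
    intro γ hγ
    rw [passEnd_add_one] at hγ
    rcases eq_of_lt_add_omega0 hγ with hγ | ⟨i, rfl⟩
    · exact h.quiet γ hγ
    · exact (h.pass hD i).1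

end CountThrough

end ITTM

namespace ITTM

namespace CountThrough

open Function (update)

open Ordinal

variable {x : R} {α β : Ordinal.{0}}

theorem exists_lt_le_passEnd (hα : Order.IsSuccLimit α) {γ : Ordinal.{0}} (h : γ < passEnd α) :
    ∃ β < α, γ ≤ passEnd β := by
  rcases eq_of_lt_passEnd h with ⟨i, rfl⟩ | ⟨β, hβ, i, rfl⟩
  · refine ⟨0, hα.bot_lt, ?_⟩
    rw [passEnd_zero, zero_add]
    exact (natCast_lt_omega0 i).le
  · exact ⟨β + 1, hα.add_one_lt hβ, (passEnd_add_nat_lt (lt_add_one β) i).le⟩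

theorem conf_passEnd_u (hα : Order.IsSuccLimit α) {n : ℕ}
    (h : ∀ β < α, ∃ γ, passEnd β ≤ γ ∧ γ < passEnd α ∧ (conf x γ).u n = true) :
    (conf x (passEnd α)).u n = true := by
  rw [conf_limit x (isSuccLimit_passEnd hα)]
  refine decide_eq_true fun γ hγ => ?_
  obtain ⟨β, hβ, hγβ⟩ := exists_lt_le_passEnd hα hγ
  obtain ⟨ε, h1, h2, h3⟩ := h β hβ
  exact ⟨ε, hγβ.trans h1, h2, h3⟩

theorem conf_passEnd_v (hα : Order.IsSuccLimit α) {n : ℕ}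
    (h : ∀ β < α, ∃ γ, passEnd β ≤ γ ∧ γ < passEnd α ∧ (conf x γ).v n = true) :
    (conf x (passEnd α)).v n = true := by
  rw [conf_limit x (isSuccLimit_passEnd hα)]
  refine decide_eq_true fun γ hγ => ?_
  obtain ⟨β, hβ, hγβ⟩ := exists_lt_le_passEnd hα hγ
  obtain ⟨ε, h1, h2, h3⟩ := h β hβ
  exact ⟨ε, hγβ.trans h1, h2, h3⟩

theorem Inv.limit (hα : Order.IsSuccLimit α) (ih : ∀ β < α, Inv x β)
    (hD : ∀ β < α, (conf x (passEnd β)).u 0 = true) : Inv x α := by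
  have hlim := conf_limit x (isSuccLimit_passEnd hα)
  have hne : ∀ β, α ≠ β + 1 := fun β e => by
    subst e
    exact (hα.add_one_lt (lt_add_one β)).false
  have halive : ∀ n, (conf x (passEnd α)).u (2 * n + 2) = true ↔ ∀ β < α, n ∈ surv x β := by
    refine fun n => ⟨fun h β hβ => ?_, fun h => conf_passEnd_u hα fun β hβ =>
      ⟨passEnd β, le_rfl, passEnd_strictMono hβ,
        ((ih β hβ).alive n).2 fun γ hγ => h γ (hγ.trans hβ)⟩⟩
    by_contra hn
    rw [hlim] at h
    obtain ⟨γ, h1, h2, h3⟩ := of_decide_eq_true h _ (passEnd_strictMono (hα.add_one_lt hβ))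
    rcases eq_of_lt_passEnd h2 with ⟨i, rfl⟩ | ⟨ε, hε, i, rfl⟩
    · refine absurd h1 (not_le.2 ?_)
      rw [passEnd]
      exact (natCast_lt_omega0 i).trans_le le_self_add
    · have hβε : β < ε := by
        by_contra hc
        exact absurd h1 (not_le.2
          (passEnd_add_nat_lt ((not_lt.1 hc).trans_lt (lt_add_one β)) i))
      rw [((ih ε hε).pass (hD ε hε) i).2 n] at h3
      · exact Bool.false_ne_true h3
      · rw [← Bool.not_eq_true, (ih ε hε).alive n]
        exact fun h => hn (h β hβε)
  constructor
  case st => rw [hlim]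
  case hd => rw [hlim]
  case mark =>
    exact conf_passEnd_v hα fun β hβ =>
      ⟨passEnd β, le_rfl, passEnd_strictMono hβ, (ih β hβ).mark⟩
  case alive => exact halive
  case alive_bad =>
    intro n
    rw [halive, forall_lt_limit_mem_surv hα]
    refine and_iff_left_of_imp fun hn => conf_passEnd_u hα fun β hβ =>
      ⟨passEnd β, le_rfl, passEnd_strictMono hβ, (((ih β hβ).alive_bad n).2 ?_).2⟩
    exact surv_anti hβ.le hn
  case flash =>
    refine iff_of_true (conf_passEnd_v hα fun β hβ =>
      ⟨passEnd β + (3 : ℕ), le_self_add, passEnd_add_nat_lt hβ 3, ?_⟩) hne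
    obtain ⟨_, -, -, -, h, -⟩ :=
      pass_start (x := x) (ih β hβ).st (ih β hβ).hd (ih β hβ).mark (hD β hβ)
    rwa [conf_add_nat]
  case changed =>
    refine iff_of_true (conf_passEnd_u hα fun β hβ =>
      ⟨passEnd β, le_rfl, passEnd_strictMono hβ, hD β hβ⟩) ?_
    rintro ⟨β, e, -⟩
    exact hne _ e
  case nonempty => exact fun β e => absurd e (hne β)
  case quiet =>
    intro γ hγ
    rcases eq_of_lt_passEnd hγ with ⟨i, rfl⟩ | ⟨β, hβ, i, rfl⟩
    · refine (ih 0 hα.bot_lt).quiet _ ?_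
      rw [passEnd_zero, zero_add]
      exact natCast_lt_omega0 i
    · exact ((ih β hβ).pass (hD β hβ) i).1

theorem inv_of_forall (h : ∀ β < α, (conf x (passEnd β)).u 0 = true) : Inv x α := by
  induction α using Ordinal.limitRecOn with
  | zero => exact Inv.zero x
  | add_one α ih =>
    exact (ih fun β hβ => h β (hβ.trans (lt_add_one α))).add_one (h α (lt_add_one α))
  | limit α hα ih =>
    exact Inv.limit hα (fun β hβ => ih β hβ fun γ hγ => h γ (hγ.trans hβ)) h

/-- Some pass removes no index. -/
theorem exists_inv_unchanged (x : R) : ∃ β, Inv x (β + 1 + 1) ∧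
    (conf x (passEnd (β + 1 + 1))).u 0 = false ∧ surv x (β + 1) = surv x β := by
  have hex : ∃ α, (conf x (passEnd α)).u 0 = false := by
    by_contra! hc
    obtain ⟨β, hβ⟩ := exists_surv_add_one_eq x
    have h : ∀ α, (conf x (passEnd α)).u 0 = true := fun α => by simpa using hc α
    exact (inv_of_forall fun β _ => h β).changed.1 (h _) ⟨β, rfl, hβ⟩
  obtain ⟨α, hα, hmin⟩ := WellFounded.has_min Ordinal.lt_wf
    {α | (conf x (passEnd α)).u 0 = false} hex
  have hinv : Inv x α := inv_of_forall fun β hβ => by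
    simpa using fun h => hmin β h hβ
  have hα' : (conf x (passEnd α)).u 0 = false := hα
  obtain ⟨β, rfl, hβ⟩ : ∃ β, α = β + 1 + 1 ∧ surv x (β + 1) = surv x β := by
    by_contra hc
    exact Bool.false_ne_true (hα'.symm.trans (hinv.changed.2 hc))
  exact ⟨β, hinv, hα', hβ⟩

/-- The erasure of the output tape. -/
theorem iterate_clean (u v : ℕ → Bool) (i : ℕ) :
    ∃ w, (cstep x)^[i] ⟨⟨.clean, false, true⟩, 0, u, v⟩ = ⟨⟨.clean, false, true⟩, i, u, w⟩ ∧
      ∀ n < i, w n = false := by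
  induction i with
  | zero => exact ⟨v, rfl, by simp⟩
  | succ i ih =>
    obtain ⟨w, h, hw⟩ := ih
    refine ⟨update w i false, ?_, fun n hn => ?_⟩
    · rw [Function.iterate_succ_apply', h]
      simp [cstep, δ]
    · rcases (Nat.lt_succ_iff_lt_or_eq.1 hn) with hn | rfl
      · rw [Function.update_of_ne hn.ne, hw n hn]
      · simp

theorem outputs_of_clean (hst : (conf x α).st = ⟨.lim, false, true⟩) (hhd : (conf x α).hd = 0)
    (hmark : (conf x α).v 1 = true) (hu : (conf x α).u 0 = false)
    (hquiet : ∀ γ < α, (conf x γ).st.ctl ≠ .halt) :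
    mach.outputs x (update zeroR 0 (!(conf x α).u 1)) := by
  have h2 : ∃ v, (cstep x)^[2] (conf x α) = ⟨⟨.clean, false, true⟩, 0, (conf x α).u, v⟩ := by
    generalize conf x α = c at *
    obtain ⟨s, h, u, v⟩ := c
    subst hst hhd
    dsimp only at hmark hu
    refine ⟨update v 1 false, ?_⟩
    simp [cstep, δ, hmark, hu]
    rw [← hu, Function.update_eq_self, Function.update_eq_self]
  have hlt : ∀ i < 2, ((cstep x)^[i] (conf x α)).st.ctl ≠ .halt := fun i hi => by
    interval_cases i <;> simp [cstep, δ, hst]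
  obtain ⟨v, h2⟩ := h2
  have hi : ∀ i, ∃ w, (cstep x)^[i + 2] (conf x α) =
      ⟨⟨.clean, false, true⟩, i, (conf x α).u, w⟩ ∧ ∀ n < i, w n = false := fun i => by
    rw [Function.iterate_add_apply, h2]
    exact iterate_clean _ v i
  have hlim := conf_limit x (isSuccLimit_add_omega0 α)
  have hv : (conf x (α + ω)).v = zeroR := by
    funext n
    refine conf_add_omega0_v x (j := n + 3) fun i hn => ?_
    obtain ⟨j, rfl⟩ := Nat.exists_eq_add_of_le' (show 2 ≤ i by omega)
    obtain ⟨w, h, hw⟩ := hi j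
    rw [h]
    exact hw n (by omega)
  have hu1 : (conf x (α + ω)).u 1 = (conf x α).u 1 := by
    refine conf_add_omega0_u x (j := 2) fun i hn => ?_
    obtain ⟨j, rfl⟩ := Nat.exists_eq_add_of_le' hn
    obtain ⟨w, h, -⟩ := hi j
    rw [h]
  have hst' : (conf x (α + ω)).st = ⟨.lim, false, true⟩ := by rw [hlim]
  have hhd' : (conf x (α + ω)).hd = 0 := by rw [hlim]
  rw [← hu1]
  refine outputs_of_conf x (α := α + ω + (3 : ℕ)) ?_ (fun γ hγ => ?_) ?_
  · rw [conf_add_nat]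
    simp [cstep, δ, hst', hhd', hv, zeroR]
  · rcases lt_or_ge γ (α + ω) with h | h
    · rcases eq_of_lt_add_omega0 h with h | ⟨i, rfl⟩
      · exact hquiet γ h
      · rw [conf_add_nat]
        by_cases h2 : i < 2
        · exact hlt i h2
        · obtain ⟨j, rfl⟩ := Nat.exists_eq_add_of_le' (not_lt.1 h2)
          obtain ⟨w, h, -⟩ := hi j
          simp [h]
    · rcases eq_of_lt_add_omega0 (hγ.trans ((add_lt_add_iff_left _).2 (natCast_lt_omega0 3))) with
        h' | ⟨i, rfl⟩
      · exact absurd h (not_le.2 h')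
      · have hi3 : i < 3 := by simpa using hγ
        rw [conf_add_nat]
        interval_cases i <;> simp [cstep, δ, hst', hhd', hv, zeroR]
  · rw [conf_add_nat]
    funext n
    simp [cstep, δ, hst', hhd', hv, Function.update_apply, zeroR]

theorem mach_decides (x : R) :
    (x ∈ WO → mach.outputs x oneR) ∧ (x ∉ WO → mach.outputs x zeroR) := by
  obtain ⟨β, h, hu, e⟩ := exists_inv_unchanged x
  have hout := outputs_of_clean h.st h.hd h.mark hu h.quiet
  have hne := h.nonempty _ rfl
  rcases (surv x (β + 1)).eq_empty_or_nonempty with hs | hs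
  · have h1 : (conf x (passEnd (β + 1 + 1))).u 1 = false := by
      rw [← Bool.not_eq_true, hne, hs]
      exact Set.not_nonempty_empty
    have hy : update zeroR 0 (!false) = oneR := by
      funext n
      simp [Function.update_apply, zeroR, oneR]
    rw [h1, hy] at hout
    exact ⟨fun _ => hout, fun hx => absurd (codesWellOrder_of_surv_eq_empty hs) hx⟩
  · have hy : update zeroR 0 (!true) = zeroR := by
      funext n
      simp [Function.update_apply, zeroR]
    rw [hne.2 hs, hy] at hout
    exact ⟨fun hx => absurd hx (not_codesWellOrder_of_surv_add_one_eq e (e ▸ hs)),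
      fun _ => hout⟩

end CountThrough

end ITTM

/-- **Count-Through Theorem.** The set `WO` of reals coding well-orders is
infinite time decidable. -/
theorem WO_decidable : ITTM.ITTMDecidable ITTM.WO := by
  exact ⟨ITTM.CountThrough.mach, ITTM.CountThrough.mach_decides⟩
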